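/- Let R > 0, C > 0, and let v be a C² positive function on the punctured disk {z ∈ ℝ² : 0 < |z| < R} satisfying 0 ≤ -Δv ≤ C·e^{2v} there. Then either v extends to a C¹ function on a neighborhood of the origin, or there exists a finite positive number m₁ such that v(z)/log(1/|z|) → m₁ as |z| → 0⁺. -/

import Mathlib

open MeasureTheory Filter Metric
open scoped ENNReal

/-- The Euclidean Laplacian of a function on `ℝ²`:
`Δv = ∂²v/∂x² + ∂²v/∂y²`. -/
noncomputable def lap (v : EuclideanSpace ℝ (Fin 2) → ℝ)
    (z : EuclideanSpace ℝ (Fin 2)) : ℝ :=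
  fderiv ℝ (fun w => fderiv ℝ v w (EuclideanSpace.single 0 1)) z (EuclideanSpace.single 0 1) +
  fderiv ℝ (fun w => fderiv ℝ v w (EuclideanSpace.single 1 1)) z (EuclideanSpace.single 1 1)

/-!
Cut `v` off near the origin. Testing `-Δv ≥ 0` against logarithmic cutoffs shows that `Δv` is
integrable up to the origin, so `v` is the logarithmic potential of `Δv` plus `m log (1/|z|)`, where
`m` is a multiple of minus the mass of the distribution `Δv` at the origin. The potential is
`o(log (1/|z|))`: given `z`, let `y` maximize over the disk of radius `|z|/2` about `z` the function
`v` plus a multiple of the logarithm of the distance to the circle. Near `y` the bound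
`-Δv ≤ C e^{2v}` gives `-Δv ≤ 2 C e^{2v(y)}`, so, as `∫ -Δv` near the origin is small, the potential
at `y` is at most a small multiple of `v(y) + log (1/|z|)` up to a constant. Hence
`v / log (1/|z|) → m ≥ 0`. If `m = 0`, then `-Δv` is `O(|z|^{-1/4})`, so the gradient of the
logarithmic kernel can be integrated against it and the potential is `C¹`.
-/

open scoped Topology Real RealInnerProductSpace

/-! ### Directional derivatives -/

section DirDeriv

variable {E : Type*} [NormedAddCommGroup E] [NormedSpace ℝ E] {f g : E → ℝ} {x : E}

/-- The derivative of `f` in the direction `e`, as a function of the point, so that it can be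
iterated; it is zero wherever `f` is not differentiable. -/
noncomputable def dirDeriv (e : E) (f : E → ℝ) (x : E) : ℝ :=
  fderiv ℝ f x e

theorem dirDeriv_congr (e : E) (h : f =ᶠ[𝓝 x] g) : dirDeriv e f =ᶠ[𝓝 x] dirDeriv e g := by
  filter_upwards [h.fderiv (𝕜 := ℝ)] with w hw
  simp only [dirDeriv, hw]

theorem contDiffAt_dirDeriv {m n : WithTop ℕ∞} (e : E) (h : ContDiffAt ℝ n f x)
    (hmn : m + 1 ≤ n) : ContDiffAt ℝ m (dirDeriv e f) x :=
  (h.fderiv_right hmn).clm_apply contDiffAt_const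

theorem continuousAt_dirDeriv (e : E) (h : ContDiffAt ℝ 1 f x) : ContinuousAt (dirDeriv e f) x :=
  (contDiffAt_dirDeriv (m := 0) e h (by simp)).continuousAt

theorem contDiffAt_one_dirDeriv (e : E) (h : ContDiffAt ℝ 2 f x) :
    ContDiffAt ℝ 1 (dirDeriv e f) x :=
  contDiffAt_dirDeriv e h (by norm_num)

theorem tsupport_dirDeriv_subset (e : E) (f : E → ℝ) : tsupport (dirDeriv e f) ⊆ tsupport f :=
  tsupport_fderiv_apply_subset ℝ e

theorem dirDeriv_neg (e : E) (f : E → ℝ) :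
    dirDeriv e (fun w => -f w) = fun w => -dirDeriv e f w := by
  ext w
  simp [dirDeriv, fderiv_fun_neg]

theorem dirDeriv_comp_const_sub (e : E) (f : E → ℝ) (c : E) :
    dirDeriv e (fun w => f (c - w)) = fun w => -dirDeriv e f (c - w) := by
  ext w
  have reflect : fderiv ℝ (fun u => f (-u)) (w - c) = -fderiv ℝ f (-(w - c)) := by
    simpa using fderiv_comp_smul (f := f) (x := w - c) (-1 : ℝ)
  have translate := fderiv_comp_sub (𝕜 := ℝ) (f := fun u => f (-u)) (x := w) c
  simp only [neg_sub] at reflect translate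
  rw [dirDeriv, translate, reflect]
  rfl

theorem dirDeriv_add (e : E) (hf : DifferentiableAt ℝ f x) (hg : DifferentiableAt ℝ g x) :
    dirDeriv e (fun w => f w + g w) x = dirDeriv e f x + dirDeriv e g x := by
  simp [dirDeriv, fderiv_fun_add hf hg]

theorem dirDeriv_mul (e : E) (hf : DifferentiableAt ℝ f x) (hg : DifferentiableAt ℝ g x) :
    dirDeriv e (fun w => f w * g w) x = f x * dirDeriv e g x + g x * dirDeriv e f x := by
  simp [dirDeriv, fderiv_fun_mul hf hg]

theorem dirDeriv_dirDeriv_mul (e : E) (hf : ContDiffAt ℝ 2 f x) (hg : ContDiffAt ℝ 2 g x) :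
    dirDeriv e (dirDeriv e (fun w => f w * g w)) x =
      f x * dirDeriv e (dirDeriv e g) x + 2 * (dirDeriv e f x * dirDeriv e g x) +
        g x * dirDeriv e (dirDeriv e f) x := by
  have differentiable {h : E → ℝ} {w : E} (hh : ContDiffAt ℝ 2 h w) : DifferentiableAt ℝ h w :=
    hh.differentiableAt two_ne_zero
  have product_rule : dirDeriv e (fun w => f w * g w) =ᶠ[𝓝 x]
      fun w => f w * dirDeriv e g w + g w * dirDeriv e f w := by
    filter_upwards [hf.eventually (by simp), hg.eventually (by simp)] with w hfw hgw
      using dirDeriv_mul e (differentiable hfw) (differentiable hgw)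
  have hf' := (contDiffAt_one_dirDeriv e hf).differentiableAt one_ne_zero
  have hg' := (contDiffAt_one_dirDeriv e hg).differentiableAt one_ne_zero
  rw [(dirDeriv_congr e product_rule).self_of_nhds,
    dirDeriv_add e ((differentiable hf).fun_mul hg') ((differentiable hg).fun_mul hf'),
    dirDeriv_mul e (differentiable hf) hg', dirDeriv_mul e (differentiable hg) hf']
  ring

end DirDeriv

section InnerProductSpace

variable {E : Type*} [NormedAddCommGroup E] [InnerProductSpace ℝ E] {x : E}

theorem dirDeriv_comp_norm_sq {H : ℝ → ℝ} {H' : ℝ} (e : E) (h : HasDerivAt H H' (‖x‖ ^ 2)) :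
    dirDeriv e (fun w => H (‖w‖ ^ 2)) x = 2 * ⟪x, e⟫ * H' := by
  have chain_rule : HasFDerivAt (fun w : E => H (‖w‖ ^ 2)) _ x :=
    h.comp_hasFDerivAt x (hasStrictFDerivAt_norm_sq x).hasFDerivAt
  rw [dirDeriv, chain_rule.fderiv]
  simp
  ring

theorem dirDeriv_dirDeriv_comp_norm_sq {H H' : ℝ → ℝ} {H'' : ℝ} (e : E)
    (h : ∀ᶠ q in 𝓝 (‖x‖ ^ 2), HasDerivAt H (H' q) q) (h' : HasDerivAt H' H'' (‖x‖ ^ 2)) :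
    dirDeriv e (dirDeriv e (fun w => H (‖w‖ ^ 2))) x =
      2 * ‖e‖ ^ 2 * H' (‖x‖ ^ 2) + 4 * ⟪x, e⟫ ^ 2 * H'' := by
  have norm_sq_tendsto : Tendsto (fun w : E => ‖w‖ ^ 2) (𝓝 x) (𝓝 (‖x‖ ^ 2)) :=
    (continuous_norm.pow 2).continuousAt
  have first_order : dirDeriv e (fun w => H (‖w‖ ^ 2)) =ᶠ[𝓝 x]
      fun w => (2 * ⟪w, e⟫) * H' (‖w‖ ^ 2) := by
    filter_upwards [norm_sq_tendsto.eventually h] with w hw using dirDeriv_comp_norm_sq e hw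
  have inner_deriv : HasFDerivAt (fun w : E => 2 * ⟪w, e⟫) ((2 : ℝ) • innerSL ℝ e) x := by
    simpa only [real_inner_comm, innerSL_apply_apply] using
      (innerSL ℝ e).hasFDerivAt.const_mul (2 : ℝ)
  have H'_diff : DifferentiableAt ℝ (fun w : E => H' (‖w‖ ^ 2)) x :=
    (h'.comp_hasFDerivAt x (hasStrictFDerivAt_norm_sq x).hasFDerivAt).differentiableAt
  rw [(dirDeriv_congr e first_order).self_of_nhds,
    dirDeriv_mul e inner_deriv.differentiableAt H'_diff, dirDeriv_comp_norm_sq e h', dirDeriv,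
    inner_deriv.fderiv]
  simp only [smul_apply, innerSL_apply_apply, smul_eq_mul,
    real_inner_self_eq_norm_sq]
  ring

end InnerProductSpace

/-! ### Integration by parts -/

section IntegrationByParts

theorem continuous_mul_of_continuousAt_tsupport {X : Type*} [TopologicalSpace X] {a b : X → ℝ}
    (ha : ∀ x ∈ tsupport b, ContinuousAt a x) (hb : Continuous b) :
    Continuous fun x => a x * b x :=
  continuous_of_tsupport fun x hx =>
    (ha x (tsupport_mul_subset_right hx)).mul hb.continuousAt

theorem contDiff_mul_of_contDiffAt_tsupport {E : Type*} [NormedAddCommGroup E] [NormedSpace ℝ E]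
    {n : WithTop ℕ∞} {a b : E → ℝ} (ha : ∀ x ∈ tsupport b, ContDiffAt ℝ n a x)
    (hb : ContDiff ℝ n b) : ContDiff ℝ n fun x => a x * b x := by
  refine contDiff_iff_contDiffAt.2 fun x => ?_
  by_cases hx : x ∈ tsupport b
  · exact (ha x hx).mul hb.contDiffAt
  · refine (contDiffAt_const (c := (0 : ℝ))).congr_of_eventuallyEq ?_
    filter_upwards [notMem_tsupport_iff_eventuallyEq.1 hx] with y hy
    simp [hy]

theorem integrable_mul_of_continuousAt_tsupport {X : Type*} [TopologicalSpace X]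
    [MeasurableSpace X] [OpensMeasurableSpace X] [T2Space X] [SecondCountableTopology X]
    (μ : Measure X) [IsFiniteMeasureOnCompacts μ] {a b : X → ℝ}
    (ha : ∀ x ∈ tsupport b, ContinuousAt a x) (ha_supp : HasCompactSupport a)
    (hb : Continuous b) : Integrable (fun x => a x * b x) μ :=
  (continuous_mul_of_continuousAt_tsupport ha hb).integrable_of_hasCompactSupport
    ha_supp.mul_right

variable {E : Type*} [NormedAddCommGroup E] [NormedSpace ℝ E] [FiniteDimensional ℝ E]
  [MeasurableSpace E] [BorelSpace E] (μ : Measure E) [μ.IsAddHaarMeasure]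

theorem integral_mul_dirDeriv_eq_neg {a b : E → ℝ} (e : E)
    (ha : ∀ x ∈ tsupport b, ContDiffAt ℝ 1 a x) (ha_supp : HasCompactSupport a)
    (hb : ContDiff ℝ 1 b) :
    ∫ x, a x * dirDeriv e b x ∂μ = -∫ x, dirDeriv e a x * b x ∂μ := by
  refine integral_mul_fderiv_eq_neg_fderiv_mul_of_integrable ?_ ?_ ?_ ?_ ?_
  · exact integrable_mul_of_continuousAt_tsupport μ
      (fun x hx => continuousAt_dirDeriv e (ha x hx)) (ha_supp.fderiv_apply ℝ e) hb.continuous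
  · exact integrable_mul_of_continuousAt_tsupport μ
      (fun x hx => (ha x (tsupport_dirDeriv_subset e b hx)).continuousAt) ha_supp
      (continuous_iff_continuousAt.2 fun x => continuousAt_dirDeriv e hb.contDiffAt)
  · exact integrable_mul_of_continuousAt_tsupport μ (fun x hx => (ha x hx).continuousAt) ha_supp
      hb.continuous
  · exact fun x hx => (ha x hx).differentiableAt one_ne_zero
  · exact fun x _ => (hb.differentiable one_ne_zero).differentiableAt

theorem integral_mul_dirDeriv_dirDeriv {a b : E → ℝ} (e : E)
    (ha : ∀ x ∈ tsupport b, ContDiffAt ℝ 2 a x) (ha_supp : HasCompactSupport a)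
    (hb : ContDiff ℝ 2 b) :
    ∫ x, a x * dirDeriv e (dirDeriv e b) x ∂μ = ∫ x, dirDeriv e (dirDeriv e a) x * b x ∂μ := by
  have hb' : ContDiff ℝ 1 (dirDeriv e b) :=
    contDiff_iff_contDiffAt.2 fun x => contDiffAt_one_dirDeriv e hb.contDiffAt
  rw [integral_mul_dirDeriv_eq_neg μ e
      (fun x hx => (ha x (tsupport_dirDeriv_subset e b hx)).of_le one_le_two) ha_supp hb',
    integral_mul_dirDeriv_eq_neg μ e (fun x hx => contDiffAt_one_dirDeriv e (ha x hx))
      (ha_supp.fderiv_apply ℝ e) (hb.of_le one_le_two), neg_neg]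

end IntegrationByParts

/-! ### The Laplacian of the plane -/

/-- The Euclidean plane. -/
abbrev Plane := EuclideanSpace ℝ (Fin 2)

section Laplacian

variable {f g : Plane → ℝ} {z : Plane}

theorem lap_eq_sum (f : Plane → ℝ) (z : Plane) :
    lap f z =
      ∑ i, dirDeriv (EuclideanSpace.single i 1) (dirDeriv (EuclideanSpace.single i 1) f) z := by
  rw [Fin.sum_univ_two]; rfl

theorem lap_congr (h : f =ᶠ[𝓝 z] g) : lap f z = lap g z := by
  simp only [lap_eq_sum, (dirDeriv_congr _ (dirDeriv_congr _ h)).self_of_nhds]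

theorem lap_mul (hf : ContDiffAt ℝ 2 f z) (hg : ContDiffAt ℝ 2 g z) :
    lap (fun w => f w * g w) z =
      f z * lap g z + 2 * ∑ i, dirDeriv (EuclideanSpace.single i 1) f z *
        dirDeriv (EuclideanSpace.single i 1) g z + g z * lap f z := by
  simp only [lap_eq_sum, dirDeriv_dirDeriv_mul _ hf hg, Fin.sum_univ_two]
  ring

theorem continuousAt_lap (h : ContDiffAt ℝ 2 f z) : ContinuousAt (lap f) z :=
  (continuousAt_dirDeriv _ (contDiffAt_one_dirDeriv _ h)).add
    (continuousAt_dirDeriv _ (contDiffAt_one_dirDeriv _ h))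

theorem lap_comp_norm_sq {H H' : ℝ → ℝ} {H'' : ℝ}
    (h : ∀ᶠ q in 𝓝 (‖z‖ ^ 2), HasDerivAt H (H' q) q) (h' : HasDerivAt H' H'' (‖z‖ ^ 2)) :
    lap (fun w => H (‖w‖ ^ 2)) z = 4 * H' (‖z‖ ^ 2) + 4 * ‖z‖ ^ 2 * H'' := by
  have norm_sq_eq : ‖z‖ ^ 2 = z 0 ^ 2 + z 1 ^ 2 := by simp [EuclideanSpace.norm_sq_eq]
  simp only [lap_eq_sum, dirDeriv_dirDeriv_comp_norm_sq _ h h', Fin.sum_univ_two,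
    PiLp.norm_single, EuclideanSpace.inner_single_right, one_mul, norm_one,
    norm_sq_eq, conj_trivial]
  ring

theorem lap_eq_zero_of_eventuallyEq_zero (h : f =ᶠ[𝓝 z] 0) : lap f z = 0 := by
  rw [lap_congr h]
  simp [lap]

theorem tsupport_lap_subset (f : Plane → ℝ) : tsupport (lap f) ⊆ tsupport f := by
  intro z
  contrapose
  simp only [notMem_tsupport_iff_eventuallyEq]
  intro hf
  filter_upwards [hf.eventuallyEq_nhds] with w hw using lap_eq_zero_of_eventuallyEq_zero hw

theorem lap_sub_const (f : Plane → ℝ) (a : ℝ) (z : Plane) :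
    lap (fun w => f w - a) z = lap f z := by
  simp only [lap, fderiv_sub_const]

theorem lap_comp_const_sub (f : Plane → ℝ) (z x : Plane) :
    lap (fun w => f (z - w)) x = lap f (z - x) := by
  simp only [lap_eq_sum, dirDeriv_comp_const_sub, dirDeriv_neg, neg_neg]

theorem integral_mul_lap {a b : Plane → ℝ} (ha : ∀ z ∈ tsupport b, ContDiffAt ℝ 2 a z)
    (ha_supp : HasCompactSupport a) (hb : ContDiff ℝ 2 b) :
    ∫ z, a z * lap b z = ∫ z, lap a z * b z := by
  simp only [lap_eq_sum, Finset.mul_sum, Finset.sum_mul]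
  rw [integral_finsetSum, integral_finsetSum]
  · exact Finset.sum_congr rfl fun i _ =>
      integral_mul_dirDeriv_dirDeriv volume _ ha ha_supp hb
  · exact fun i _ => integrable_mul_of_continuousAt_tsupport volume
      (fun z hz => continuousAt_dirDeriv _ (contDiffAt_one_dirDeriv _ (ha z hz)))
      ((ha_supp.fderiv_apply ℝ _).fderiv_apply ℝ _) hb.continuous
  · exact fun i _ => integrable_mul_of_continuousAt_tsupport volume
      (fun z hz => (ha z (tsupport_dirDeriv_subset _ _
        (tsupport_dirDeriv_subset _ _ hz))).continuousAt) ha_supp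
      (continuous_iff_continuousAt.2 fun z =>
        continuousAt_dirDeriv _ (contDiffAt_one_dirDeriv _ hb.contDiffAt))

end Laplacian

/-! ### A logarithmic cutoff -/

section Cutoff

theorem hasDerivAt_max_zero_pow (n : ℕ) (s : ℝ) :
    HasDerivAt (fun s : ℝ => max 0 s ^ (n + 2)) ((n + 2) * max 0 s ^ (n + 1)) s := by
  rcases lt_trichotomy s 0 with hs | rfl | hs
  · have h : (fun s : ℝ => max 0 s ^ (n + 2)) =ᶠ[𝓝 s] fun _ => 0 := by
      filter_upwards [Iio_mem_nhds hs] with t ht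
      simp [max_eq_left (Set.mem_Iio.1 ht).le]
    simpa [max_eq_left hs.le] using (hasDerivAt_const s (0 : ℝ)).congr_of_eventuallyEq h
  · have h : (fun s : ℝ => max 0 s ^ (n + 2)) =O[𝓝 0] fun s => ‖s - 0‖ ^ (n + 2) := by
      refine Asymptotics.IsBigO.of_bound 1 (Eventually.of_forall fun t => ?_)
      simp only [norm_pow, one_mul, sub_zero, norm_norm]
      gcongr
      rw [Real.norm_eq_abs, Real.norm_eq_abs, abs_of_nonneg (le_max_left _ _)]
      exact max_le (abs_nonneg _) (le_abs_self _)
    simpa [hasDerivAt_iff_hasFDerivAt] using h.hasFDerivAt (𝕜 := ℝ) (by omega)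
  · have h : (fun s : ℝ => max 0 s ^ (n + 2)) =ᶠ[𝓝 s] fun s => s ^ (n + 2) := by
      filter_upwards [Ioi_mem_nhds hs] with t ht
      rw [max_eq_right (Set.mem_Ioi.1 ht).le]
    rw [max_eq_right hs.le]
    convert! (hasDerivAt_pow (n + 2) s).congr_of_eventuallyEq h using 1
    push_cast
    rfl

theorem contDiff_max_zero_pow (n : ℕ) : ContDiff ℝ n (fun s : ℝ => max 0 s ^ (n + 1)) := by
  induction n with
  | zero => exact contDiff_zero.2 (by fun_prop)
  | succ n ih =>
    rw [Nat.cast_succ, contDiff_succ_iff_deriv]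
    refine ⟨fun s => (hasDerivAt_max_zero_pow n s).differentiableAt, by simp, ?_⟩
    rw [funext fun s => (hasDerivAt_max_zero_pow n s).deriv]
    exact contDiff_const.mul ih

theorem posLog_eventuallyEq_zero : log⁺ =ᶠ[𝓝 0] 0 := by
  filter_upwards [ball_mem_nhds (0 : ℝ) one_pos] with q hq
  exact (Real.posLog_eq_zero_iff q).2 (by simpa using (mem_ball_zero_iff.1 hq).le)

theorem hasDerivAt_posLog_pow (n : ℕ) (q : ℝ) :
    HasDerivAt (fun q => log⁺ q ^ (n + 2))
      ((n + 2) * log⁺ q ^ (n + 1) / q) q := by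
  rcases eq_or_ne q 0 with rfl | hq
  · refine (hasDerivAt_const (0 : ℝ) (0 : ℝ)).congr_of_eventuallyEq ?_ |>.congr_deriv (by simp)
    filter_upwards [posLog_eventuallyEq_zero] with q hq
    simp [hq]
  · exact (hasDerivAt_max_zero_pow n (Real.log q)).comp q (Real.hasDerivAt_log hq)

theorem contDiff_posLog_pow (n : ℕ) : ContDiff ℝ n (fun q : ℝ => log⁺ q ^ (n + 1)) := by
  refine contDiff_iff_contDiffAt.2 fun q => ?_
  rcases eq_or_ne q 0 with rfl | hq
  · refine (contDiffAt_const (c := (0 : ℝ))).congr_of_eventuallyEq ?_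
    filter_upwards [posLog_eventuallyEq_zero] with q hq
    simp [hq]
  · exact (contDiff_max_zero_pow n).contDiffAt.comp q (Real.contDiffAt_log.2 hq)

/-- The logarithmic ramp `q ↦ log⁺ (eᵏ q) / k`, rising from `0` at `q = e⁻ᵏ` to `1` at `q = 1`. -/
noncomputable def logRamp (k q : ℝ) : ℝ := log⁺ (Real.exp k * q) / k

variable {k q : ℝ}

theorem logRamp_nonneg (hk : 0 < k) (q : ℝ) : 0 ≤ logRamp k q :=
  div_nonneg Real.posLog_nonneg hk.le

theorem logRamp_le_one (hk : 0 < k) (hq : 0 ≤ q) (hq_one : q ≤ 1) : logRamp k q ≤ 1 := by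
  have h : log⁺ (Real.exp k * q) ≤ log⁺ (Real.exp k) :=
    Real.posLog_le_posLog (by positivity) (mul_le_of_le_one_right (Real.exp_pos k).le hq_one)
  rw [logRamp, div_le_one hk]
  simpa [Real.posLog_apply, hk.le] using h

theorem logRamp_eq_max (hk : 0 < k) (hq : q ≠ 0) :
    logRamp k q = max 0 (1 + Real.log q / k) := by
  rw [logRamp, Real.posLog_apply, Real.log_mul (Real.exp_pos k).ne' hq, Real.log_exp,
    ← max_div_div_right hk.le, zero_div, add_div, div_self hk.ne']

theorem hasDerivAt_logRamp_pow (n : ℕ) (k q : ℝ) :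
    HasDerivAt (fun q => logRamp k q ^ (n + 2))
      ((n + 2) * logRamp k q ^ (n + 1) * (k * q)⁻¹) q := by
  have h := ((hasDerivAt_posLog_pow n (Real.exp k * q)).comp q
    ((hasDerivAt_id q).const_mul (Real.exp k))).div_const (k ^ (n + 2))
  simp only [logRamp, div_pow]
  refine h.congr_deriv ?_
  rcases eq_or_ne k 0 with rfl | hk
  · simp
  rcases eq_or_ne q 0 with rfl | hq
  · simp
  field_simp
  ring

/-- A radial `C²` cutoff, subharmonic away from the origin, which vanishes for `‖z‖² ≤ e⁻ᵏ` and
tends to `1` away from the origin as `k → ∞`. -/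
noncomputable def cutoff (k : ℝ) (z : Plane) : ℝ := logRamp k (‖z‖ ^ 2) ^ 3

variable {z : Plane}

theorem cutoff_nonneg (hk : 0 < k) (z : Plane) : 0 ≤ cutoff k z :=
  pow_nonneg (logRamp_nonneg hk _) 3

theorem cutoff_le_one (hk : 0 < k) (hz : ‖z‖ ≤ 1) : cutoff k z ≤ 1 :=
  pow_le_one₀ (logRamp_nonneg hk _)
    (logRamp_le_one hk (by positivity) (pow_le_one₀ (norm_nonneg z) hz))

theorem tendsto_cutoff (hz : z ≠ 0) : Tendsto (fun k => cutoff k z) atTop (𝓝 1) := by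
  have hlim : Tendsto (fun k => max 0 (1 + Real.log (‖z‖ ^ 2) / k) ^ 3) atTop
      (𝓝 (max 0 (1 + 0) ^ 3)) :=
    (tendsto_const_nhds.max (tendsto_const_nhds.add
      (tendsto_const_nhds.div_atTop tendsto_id))).pow 3
  rw [add_zero, max_eq_right zero_le_one, one_pow] at hlim
  refine hlim.congr' ?_
  filter_upwards [eventually_gt_atTop 0] with k hk
  rw [cutoff, logRamp_eq_max hk (by positivity)]

theorem cutoff_eventuallyEq_zero (k : ℝ) : cutoff k =ᶠ[𝓝 0] 0 := by
  have hlim : Tendsto (fun w : Plane => Real.exp k * ‖w‖ ^ 2) (𝓝 0) (𝓝 0) := by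
    simpa using (Continuous.tendsto (by fun_prop : Continuous
      fun w : Plane => Real.exp k * ‖w‖ ^ 2) 0)
  filter_upwards [hlim.eventually posLog_eventuallyEq_zero] with w hw
  simp [cutoff, logRamp, hw]

theorem contDiff_cutoff (k : ℝ) : ContDiff ℝ 2 (cutoff k) := by
  rw [show cutoff k = fun w => log⁺ (Real.exp k * ‖w‖ ^ 2) ^ 3 / k ^ 3 from
    funext fun w => div_pow _ _ 3]
  exact ((contDiff_posLog_pow 2).comp
    (contDiff_const.mul (contDiff_norm_sq ℝ))).div_const (k ^ 3)

theorem dirDeriv_cutoff (e : Plane) (k : ℝ) (z : Plane) :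
    dirDeriv e (cutoff k) z = 6 * ⟪z, e⟫ * logRamp k (‖z‖ ^ 2) ^ 2 / (k * ‖z‖ ^ 2) := by
  rw [show cutoff k = fun w => logRamp k (‖w‖ ^ 2) ^ 3 from rfl,
    dirDeriv_comp_norm_sq e (hasDerivAt_logRamp_pow 1 k (‖z‖ ^ 2))]
  push_cast
  ring

theorem lap_cutoff (hk : k ≠ 0) (hz : z ≠ 0) :
    lap (cutoff k) z = 24 * logRamp k (‖z‖ ^ 2) / (k ^ 2 * ‖z‖ ^ 2) := by
  have hq : ‖z‖ ^ 2 ≠ 0 := by positivity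
  have first_order (q : ℝ) :
      HasDerivAt (fun q => logRamp k q ^ 3) (3 * logRamp k q ^ 2 * (k * q)⁻¹) q := by
    convert hasDerivAt_logRamp_pow 1 k q using 1
    norm_num
  have second_order := ((hasDerivAt_logRamp_pow 0 k (‖z‖ ^ 2)).const_mul 3).mul
    (((hasDerivAt_id (‖z‖ ^ 2)).const_mul k).fun_inv (mul_ne_zero hk hq))
  rw [show cutoff k = fun w => logRamp k (‖w‖ ^ 2) ^ 3 from rfl,
    lap_comp_norm_sq (Eventually.of_forall first_order) second_order]
  simp only [id]
  field_simp
  push_cast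
  ring

theorem abs_dirDeriv_cutoff_le (hk : 0 < k) (e : Plane) (hz : z ≠ 0) (hz_one : ‖z‖ ≤ 1) :
    |dirDeriv e (cutoff k) z| ≤ 6 * ‖e‖ / (k * ‖z‖) := by
  have : 0 < ‖z‖ := norm_pos_iff.2 hz
  have hramp : logRamp k (‖z‖ ^ 2) ^ 2 ≤ 1 := pow_le_one₀ (logRamp_nonneg hk _)
    (logRamp_le_one hk (by positivity) (pow_le_one₀ (norm_nonneg z) hz_one))
  rw [dirDeriv_cutoff, abs_div, abs_mul, abs_mul, abs_of_pos (by norm_num : (0 : ℝ) < 6),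
    abs_of_nonneg (by positivity : 0 ≤ logRamp k (‖z‖ ^ 2) ^ 2),
    abs_of_pos (by positivity : 0 < k * ‖z‖ ^ 2)]
  calc 6 * |⟪z, e⟫| * logRamp k (‖z‖ ^ 2) ^ 2 / (k * ‖z‖ ^ 2)
      ≤ 6 * (‖z‖ * ‖e‖) * 1 / (k * ‖z‖ ^ 2) := by
        gcongr
        exact abs_real_inner_le_norm z e
    _ = 6 * ‖e‖ / (k * ‖z‖) := by field_simp

theorem lap_cutoff_nonneg (hk : 0 < k) (hz : z ≠ 0) : 0 ≤ lap (cutoff k) z := by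
  rw [lap_cutoff hk.ne' hz]
  have := logRamp_nonneg hk (‖z‖ ^ 2)
  positivity

theorem lap_cutoff_le (hk : 0 < k) (hz : z ≠ 0) (hz_one : ‖z‖ ≤ 1) :
    lap (cutoff k) z ≤ 24 / (k ^ 2 * ‖z‖ ^ 2) := by
  have : 0 < ‖z‖ := norm_pos_iff.2 hz
  rw [lap_cutoff hk.ne' hz]
  gcongr
  have := logRamp_le_one hk (by positivity : 0 ≤ ‖z‖ ^ 2) (pow_le_one₀ (norm_nonneg z) hz_one)
  linarith

theorem ne_zero_of_mem_tsupport_cutoff (hz : z ∈ tsupport (cutoff k)) : z ≠ 0 := by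
  rintro rfl
  exact notMem_tsupport_iff_eventuallyEq.2 (cutoff_eventuallyEq_zero k) hz

theorem contDiff_mul_cutoff (k : ℝ) {a : Plane → ℝ}
    (ha : ∀ z, z ≠ 0 → ContDiffAt ℝ 2 a z) : ContDiff ℝ 2 fun z => a z * cutoff k z :=
  contDiff_mul_of_contDiffAt_tsupport
    (fun z hz => ha z (ne_zero_of_mem_tsupport_cutoff hz)) (contDiff_cutoff k)

section Norm

theorem norm_eq_sqrt_norm_sq (E : Type*) [SeminormedAddCommGroup E] :
    (fun w : E => ‖w‖) = fun w => √(‖w‖ ^ 2) := by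
  simp only [Real.sqrt_sq (norm_nonneg _)]

variable {E : Type*} [NormedAddCommGroup E] [InnerProductSpace ℝ E] {x : E}

theorem dirDeriv_norm (e : E) (hx : x ≠ 0) :
    dirDeriv e (fun w => ‖w‖) x = ⟪x, e⟫ / ‖x‖ := by
  rw [norm_eq_sqrt_norm_sq E, dirDeriv_comp_norm_sq e (Real.hasDerivAt_sqrt (by positivity)),
    Real.sqrt_sq (norm_nonneg x)]
  field_simp

end Norm

theorem lap_norm (hz : z ≠ 0) : lap (fun w => ‖w‖) z = 1 / ‖z‖ := by
  have hn : 0 < ‖z‖ := norm_pos_iff.2 hz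
  have hq : ‖z‖ ^ 2 ≠ 0 := by positivity
  have second_order := ((Real.hasDerivAt_sqrt hq).const_mul 2).fun_inv
    (by rw [Real.sqrt_sq hn.le]; positivity)
  rw [norm_eq_sqrt_norm_sq Plane,
    lap_comp_norm_sq (H := Real.sqrt) (H' := fun q => (2 * √q)⁻¹) _ second_order]
  · simp only [Real.sqrt_sq hn.le]
    field_simp
    ring
  · filter_upwards [isOpen_ne.mem_nhds hq] with q hq'
    simpa using Real.hasDerivAt_sqrt hq'

theorem cutoff_div_norm_le_lap (hk : 0 < k) (hz : z ≠ 0) :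
    cutoff k z / ‖z‖ ≤ lap (fun w => ‖w‖ * cutoff k w) z := by
  have lap_term : 0 ≤ ‖z‖ * lap (cutoff k) z :=
    mul_nonneg (norm_nonneg z) (lap_cutoff_nonneg hk hz)
  have gradient_term : 0 ≤ ∑ i, dirDeriv (EuclideanSpace.single i 1) (fun w => ‖w‖) z *
      dirDeriv (EuclideanSpace.single i 1) (cutoff k) z := by
    refine Finset.sum_nonneg fun i _ => ?_
    rw [dirDeriv_norm _ hz, dirDeriv_cutoff, div_mul_div_comm, mul_assoc, mul_left_comm,
      ← mul_assoc ⟪z, _⟫, ← mul_assoc 6]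
    have := mul_self_nonneg ⟪z, EuclideanSpace.single i (1 : ℝ)⟫
    positivity
  rw [lap_mul (contDiffAt_norm ℝ hz) (contDiff_cutoff k).contDiffAt, lap_norm hz, mul_one_div]
  linarith

theorem integrable_mul_cutoff (k : ℝ) {g : Plane → ℝ} (hg : ∀ z, z ≠ 0 → ContinuousAt g z)
    (hg_supp : HasCompactSupport g) : Integrable fun z => g z * cutoff k z :=
  integrable_mul_of_continuousAt_tsupport volume
    (fun z hz => hg z (ne_zero_of_mem_tsupport_cutoff hz)) hg_supp (contDiff_cutoff k).continuous

end Cutoff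

/-! ### Superharmonic functions with an isolated singularity -/

theorem integrable_of_tendsto_of_integral_le {α ι : Type*} {m : MeasurableSpace α} {μ : Measure α}
    {l : Filter ι} [l.NeBot] [l.IsCountablyGenerated] {F : ι → α → ℝ} {f : α → ℝ} {B : ℝ}
    (hF_nonneg : ∀ᶠ i in l, 0 ≤ᵐ[μ] F i) (hF_int : ∀ᶠ i in l, Integrable (F i) μ)
    (hF_le : ∀ᶠ i in l, ∫ x, F i x ∂μ ≤ B)
    (hlim : ∀ᵐ x ∂μ, Tendsto (fun i => F i x) l (𝓝 (f x))) : Integrable f μ := by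
  obtain ⟨u, hu, hFu⟩ :=
    exists_seq_forall_of_frequently (hF_nonneg.and (hF_int.and hF_le)).frequently
  have hlim_u : ∀ᵐ x ∂μ, Tendsto (fun n => F (u n) x) atTop (𝓝 (f x)) :=
    hlim.mono fun x hx => hx.comp hu
  refine ⟨aestronglyMeasurable_of_tendsto_ae _ (fun n => (hFu n).2.1.aestronglyMeasurable) hlim_u,
    lt_of_le_of_lt ?_ (ENNReal.ofReal_lt_top (r := B))⟩
  calc ∫⁻ x, ‖f x‖ₑ ∂μ = ∫⁻ x, liminf (fun n => ‖F (u n) x‖ₑ) atTop ∂μ :=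
        lintegral_congr_ae (hlim_u.mono fun x hx => hx.enorm.liminf_eq.symm)
    _ ≤ liminf (fun n => ∫⁻ x, ‖F (u n) x‖ₑ ∂μ) atTop :=
        lintegral_liminf_le' fun n => (hFu n).2.1.aestronglyMeasurable.enorm
    _ ≤ ENNReal.ofReal B := liminf_le_of_frequently_le' <| Frequently.of_forall fun n => by
        rw [← ofReal_integral_norm_eq_lintegral_enorm (hFu n).2.1]
        refine ENNReal.ofReal_le_ofReal ((integral_congr_ae ?_).trans_le (hFu n).2.2)
        exact (hFu n).1.mono fun x hx => Real.norm_of_nonneg hx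

theorem aestronglyMeasurable_of_continuousAt_ne {X : Type*} [TopologicalSpace X]
    [SecondCountableTopology X] [MeasurableSpace X] [OpensMeasurableSpace X]
    [MeasurableSingletonClass X] {μ : Measure X} [NullSingletonClass μ] {g : X → ℝ} (a : X)
    (hg : ∀ x, x ≠ a → ContinuousAt g x) : AEStronglyMeasurable g μ := by
  have hg_on : ContinuousOn g ({a}ᶜ : Set X) := fun x hx => (hg x hx).continuousWithinAt
  have hmeas := hg_on.aestronglyMeasurable (μ := μ) (measurableSet_singleton a).compl
  rwa [Measure.restrict_eq_self_of_ae_mem (s := {a}ᶜ) (μ.ae_ne a)] at hmeas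

/-- A compactly supported model of a positive superharmonic function near an isolated
singularity: `ψ` is nonnegative and `C²` away from the origin, vanishes for `‖z‖ ≥ 1/2`, and is
superharmonic on the punctured disk of radius `r`. The radius `1/2` makes `log ‖z - w‖ ≤ 0`
whenever `ψ z` and `ψ w` are nonzero. -/
structure IsPuncturedSuperharmonic (ψ : Plane → ℝ) (r : ℝ) : Prop where
  pos : 0 < r
  smooth : ∀ z, z ≠ 0 → ContDiffAt ℝ 2 ψ z
  nonneg : ∀ z, z ≠ 0 → 0 ≤ ψ z
  supp : ∀ z, 1 / 2 ≤ ‖z‖ → ψ z = 0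
  superharmonic : ∀ z, z ≠ 0 → ‖z‖ < r → lap ψ z ≤ 0

namespace IsPuncturedSuperharmonic

variable {ψ : Plane → ℝ} {r : ℝ}

theorem hasCompactSupport (h : IsPuncturedSuperharmonic ψ r) : HasCompactSupport ψ := by
  refine HasCompactSupport.intro (isCompact_closedBall 0 (1 / 2)) fun z hz => h.supp z ?_
  rw [mem_closedBall_zero_iff, not_le] at hz
  exact hz.le

theorem lap_eq_zero (h : IsPuncturedSuperharmonic ψ r) {z : Plane} (hz : 1 / 2 < ‖z‖) :
    lap ψ z = 0 := by
  refine lap_eq_zero_of_eventuallyEq_zero ?_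
  filter_upwards [continuous_norm.continuousAt.eventually (lt_mem_nhds hz)] with w hw
    using h.supp w hw.le

theorem continuousAt_lap_of_ne (h : IsPuncturedSuperharmonic ψ r) {z : Plane} (hz : z ≠ 0) :
    ContinuousAt (lap ψ) z := continuousAt_lap (h.smooth z hz)

theorem hasCompactSupport_lap (h : IsPuncturedSuperharmonic ψ r) : HasCompactSupport (lap ψ) :=
  h.hasCompactSupport.mono' ((subset_tsupport _).trans (tsupport_lap_subset ψ))

theorem abs_lap_mul_le (h : IsPuncturedSuperharmonic ψ r) {z : Plane} {s : ℝ}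
    (hs : ‖z‖ ≤ 1 → |s| ≤ 1) : |lap ψ z * s| ≤ |lap ψ z| := by
  rcases le_or_gt ‖z‖ 1 with hz | hz
  · rw [abs_mul]
    exact mul_le_of_le_one_right (abs_nonneg _) (hs hz)
  · simp [h.lap_eq_zero (by linarith : 1 / 2 < ‖z‖)]

theorem integral_mul_lap_mul_cutoff (h : IsPuncturedSuperharmonic ψ r) (k : ℝ) {a : Plane → ℝ}
    (ha : ∀ z, z ≠ 0 → ContDiffAt ℝ 2 a z) :
    ∫ z, ψ z * lap (fun w => a w * cutoff k w) z = ∫ z, lap ψ z * (a z * cutoff k z) :=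
  integral_mul_lap (fun z hz => h.smooth z
      (ne_zero_of_mem_tsupport_cutoff (tsupport_mul_subset_right hz)))
    h.hasCompactSupport (contDiff_mul_cutoff k ha)

theorem integrableOn_lap_compl_ball (h : IsPuncturedSuperharmonic ψ r) :
    IntegrableOn (lap ψ) (ball 0 r)ᶜ := by
  have hannulus : IntegrableOn (lap ψ) (closedBall 0 1 \ ball 0 r) := by
    refine ContinuousOn.integrableOn_compact
      ((isCompact_closedBall (0 : Plane) 1).diff isOpen_ball) fun z hz => ?_
    refine (h.continuousAt_lap_of_ne ?_).continuousWithinAt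
    rintro rfl
    exact hz.2 (mem_ball_self h.pos)
  refine hannulus.of_forall_sdiff_eq_zero isOpen_ball.measurableSet.compl fun z hz => ?_
  refine h.lap_eq_zero ?_
  by_contra! hz_le
  exact hz.2 ⟨mem_closedBall_zero_iff.2 (by linarith), hz.1⟩

theorem integral_lap_mul_cutoff_nonneg (h : IsPuncturedSuperharmonic ψ r) {k : ℝ} (hk : 0 < k) :
    0 ≤ ∫ z, lap ψ z * cutoff k z := by
  have green := h.integral_mul_lap_mul_cutoff k (a := fun _ => 1) (fun z _ => contDiffAt_const)
  simp only [one_mul] at green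
  rw [← green]
  refine integral_nonneg_of_ae ((volume.ae_ne 0).mono fun z hz => ?_)
  exact mul_nonneg (h.nonneg z hz) (lap_cutoff_nonneg hk hz)

theorem neg_setIntegral_lap_mul_cutoff_le (h : IsPuncturedSuperharmonic ψ r) {k : ℝ}
    (hk : 0 < k) :
    ∫ z in ball 0 r, -(lap ψ z * cutoff k z) ≤ ∫ z in (ball 0 r)ᶜ, |lap ψ z| := by
  have hint := integrable_mul_cutoff k (fun z hz => h.continuousAt_lap_of_ne hz)
    h.hasCompactSupport_lap
  have htotal := h.integral_lap_mul_cutoff_nonneg hk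
  rw [← integral_add_compl (measurableSet_ball (x := 0) (ε := r)) hint] at htotal
  have houter : ∫ z in (ball 0 r)ᶜ, lap ψ z * cutoff k z ≤ ∫ z in (ball 0 r)ᶜ, |lap ψ z| := by
    refine integral_mono hint.integrableOn h.integrableOn_lap_compl_ball.abs fun z => ?_
    refine (le_abs_self _).trans (h.abs_lap_mul_le fun hz => ?_)
    rw [abs_of_nonneg (cutoff_nonneg hk z)]
    exact cutoff_le_one hk hz
  rw [integral_neg]
  linarith

theorem integrable_lap (h : IsPuncturedSuperharmonic ψ r) : Integrable (lap ψ) := by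
  have hball : IntegrableOn (fun z => -lap ψ z) (ball 0 r) := by
    refine integrable_of_tendsto_of_integral_le (l := atTop)
      (F := fun k z => -(lap ψ z * cutoff k z)) (B := ∫ z in (ball 0 r)ᶜ, |lap ψ z|) ?_ ?_ ?_ ?_
    · filter_upwards [eventually_gt_atTop 0] with k hk
      filter_upwards [ae_restrict_mem measurableSet_ball, ae_restrict_of_ae (volume.ae_ne 0)]
        with z hzr hz
      exact neg_nonneg.2 (mul_nonpos_of_nonpos_of_nonneg
        (h.superharmonic z hz (by simpa using hzr)) (cutoff_nonneg hk z))
    · exact Eventually.of_forall fun k => (integrable_mul_cutoff k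
        (fun z hz => h.continuousAt_lap_of_ne hz) h.hasCompactSupport_lap).neg.integrableOn
    · filter_upwards [eventually_gt_atTop 0] with k hk
        using h.neg_setIntegral_lap_mul_cutoff_le hk
    · filter_upwards [ae_restrict_of_ae (volume.ae_ne 0)] with z hz
      simpa using ((tendsto_cutoff hz).const_mul (lap ψ z)).neg
  rw [← integrableOn_univ, ← Set.union_compl_self (ball 0 r)]
  exact (by simpa using hball.neg : IntegrableOn (lap ψ) (ball 0 r)).union
    h.integrableOn_lap_compl_ball

theorem integrable_mul_lap_mul_cutoff (h : IsPuncturedSuperharmonic ψ r) (k : ℝ)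
    {a : Plane → ℝ} (ha : ∀ z, z ≠ 0 → ContDiffAt ℝ 2 a z) :
    Integrable fun z => ψ z * lap (fun w => a w * cutoff k w) z := by
  refine integrable_mul_of_continuousAt_tsupport volume (fun z hz => ?_) h.hasCompactSupport
    (continuous_iff_continuousAt.2 fun z => continuousAt_lap (contDiff_mul_cutoff k ha).contDiffAt)
  exact (h.smooth z (ne_zero_of_mem_tsupport_cutoff
    (tsupport_mul_subset_right (tsupport_lap_subset _ hz)))).continuousAt

theorem continuousAt_div_norm (h : IsPuncturedSuperharmonic ψ r) {z : Plane} (hz : z ≠ 0) :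
    ContinuousAt (fun z => ψ z / ‖z‖) z :=
  (h.smooth z hz).continuousAt.div continuous_norm.continuousAt (norm_ne_zero_iff.2 hz)

theorem integrable_div_norm_mul_cutoff (h : IsPuncturedSuperharmonic ψ r) (k : ℝ) :
    Integrable fun z => ψ z / ‖z‖ * cutoff k z :=
  integrable_mul_cutoff k (fun z hz => h.continuousAt_div_norm hz) (by
    simp only [div_eq_mul_inv]
    exact h.hasCompactSupport.mul_right)

-- Green's identity is tested with `‖z‖`, whose Laplacian `1 / ‖z‖` produces the weight.
theorem integral_div_norm_mul_cutoff_le (h : IsPuncturedSuperharmonic ψ r) {k : ℝ}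
    (hk : 0 < k) : ∫ z, ψ z / ‖z‖ * cutoff k z ≤ ∫ z, |lap ψ z| := by
  have norm_smooth : ∀ z : Plane, z ≠ 0 → ContDiffAt ℝ 2 (fun w : Plane => ‖w‖) z :=
    fun z hz => contDiffAt_norm ℝ hz
  have hint : Integrable fun z => lap ψ z * (‖z‖ * cutoff k z) := by
    simp only [← mul_assoc]
    exact integrable_mul_cutoff k
      (fun z hz => (h.continuousAt_lap_of_ne hz).mul continuous_norm.continuousAt)
      h.hasCompactSupport_lap.mul_right
  calc ∫ z, ψ z / ‖z‖ * cutoff k z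
      ≤ ∫ z, ψ z * lap (fun w => ‖w‖ * cutoff k w) z := by
        refine integral_mono_ae (h.integrable_div_norm_mul_cutoff k)
          (h.integrable_mul_lap_mul_cutoff k norm_smooth)
          ((volume.ae_ne 0).mono fun z hz => ?_)
        change ψ z / ‖z‖ * cutoff k z ≤ _
        rw [div_mul_eq_mul_div, mul_div_assoc]
        exact mul_le_mul_of_nonneg_left (cutoff_div_norm_le_lap hk hz) (h.nonneg z hz)
    _ = ∫ z, lap ψ z * (‖z‖ * cutoff k z) := h.integral_mul_lap_mul_cutoff k norm_smooth
    _ ≤ ∫ z, |lap ψ z| := by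
        refine integral_mono hint h.integrable_lap.abs fun z => ?_
        refine (le_abs_self _).trans (h.abs_lap_mul_le fun hz => ?_)
        rw [abs_of_nonneg (mul_nonneg (norm_nonneg z) (cutoff_nonneg hk z))]
        exact mul_le_one₀ hz (cutoff_nonneg hk z) (cutoff_le_one hk hz)

theorem integrable_div_norm (h : IsPuncturedSuperharmonic ψ r) :
    Integrable fun z => ψ z / ‖z‖ := by
  refine integrable_of_tendsto_of_integral_le (l := atTop)
    (F := fun k z => ψ z / ‖z‖ * cutoff k z) (B := ∫ z, |lap ψ z|) ?_
    (Eventually.of_forall h.integrable_div_norm_mul_cutoff) ?_ ?_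
  · filter_upwards [eventually_gt_atTop 0] with k hk
    filter_upwards [volume.ae_ne 0] with z hz
    exact mul_nonneg (div_nonneg (h.nonneg z hz) (norm_nonneg z)) (cutoff_nonneg hk z)
  · filter_upwards [eventually_gt_atTop 0] with k hk using h.integral_div_norm_mul_cutoff_le hk
  · filter_upwards [volume.ae_ne 0] with z hz
    simpa using (tendsto_cutoff hz).const_mul (ψ z / ‖z‖)

theorem integrable (h : IsPuncturedSuperharmonic ψ r) : Integrable ψ := by
  refine h.integrable_div_norm.mono'
    (aestronglyMeasurable_of_continuousAt_ne 0 fun z hz => (h.smooth z hz).continuousAt) ?_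
  filter_upwards [volume.ae_ne 0] with z hz
  rw [Real.norm_of_nonneg (h.nonneg z hz), le_div_iff₀ (norm_pos_iff.2 hz)]
  rcases le_or_gt (1 / 2) ‖z‖ with hz_far | hz_near
  · simp [h.supp z hz_far]
  · exact mul_le_of_le_one_right (h.nonneg z hz) (by linarith)

end IsPuncturedSuperharmonic

section TestFunction

variable {ζ : Plane → ℝ} {z : Plane} {k K : ℝ}

theorem exists_bound_unitBall (hζ : ContDiff ℝ 2 ζ) (hζ_zero : ζ 0 = 0) :
    ∃ K, 0 ≤ K ∧ ∀ z, ‖z‖ ≤ 1 → |ζ z| ≤ K * ‖z‖ ∧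
      (∀ i, |dirDeriv (EuclideanSpace.single i 1) ζ z| ≤ K) ∧ |lap ζ z| ≤ K := by
  have hcompact := isCompact_closedBall (0 : Plane) 1
  obtain ⟨K₁, hK₁⟩ := hcompact.exists_bound_of_continuousOn
    (hζ.continuous_fderiv (by norm_num)).continuousOn
  obtain ⟨K₂, hK₂⟩ := hcompact.exists_bound_of_continuousOn (f := lap ζ)
    fun z _ => (continuousAt_lap hζ.contDiffAt).continuousWithinAt
  have hK₁_nonneg : 0 ≤ K₁ := (norm_nonneg _).trans (hK₁ 0 (mem_closedBall_self zero_le_one))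
  refine ⟨max K₁ K₂, le_max_of_le_left hK₁_nonneg, fun z hz => ⟨?_, fun i => ?_, ?_⟩⟩ <;>
    rw [← mem_closedBall_zero_iff] at hz
  · have lipschitz := (convex_closedBall (0 : Plane) 1).norm_image_sub_le_of_norm_fderiv_le
      (𝕜 := ℝ) (fun x _ => (hζ.differentiable (by norm_num)).differentiableAt) hK₁
      (mem_closedBall_self zero_le_one) hz
    rw [hζ_zero, sub_zero, sub_zero] at lipschitz
    exact lipschitz.trans (mul_le_mul_of_nonneg_right (le_max_left _ _) (norm_nonneg z))
  · refine ((fderiv ℝ ζ z).le_opNorm _).trans ?_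
    simpa using Or.inl (hK₁ z hz)
  · exact (hK₂ z hz).trans (le_max_right _ _)

theorem abs_lap_mul_cutoff_sub_le (hζ : ContDiffAt ℝ 2 ζ z) (hk : 1 ≤ k) (hz : z ≠ 0)
    (hz_one : ‖z‖ ≤ 1) (hval : |ζ z| ≤ K * ‖z‖)
    (hderiv : ∀ i, |dirDeriv (EuclideanSpace.single i 1) ζ z| ≤ K) :
    |lap (fun w => ζ w * cutoff k w) z - cutoff k z * lap ζ z| ≤ 48 * K / ‖z‖ * k⁻¹ := by
  have hk_pos : 0 < k := by linarith
  have : 0 < ‖z‖ := norm_pos_iff.2 hz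
  have hK : 0 ≤ K := (abs_nonneg _).trans (hderiv 0)
  have lap_term : |ζ z * lap (cutoff k) z| ≤ 24 * K / (k * ‖z‖) := by
    rw [abs_mul, abs_of_nonneg (lap_cutoff_nonneg hk_pos hz)]
    calc |ζ z| * lap (cutoff k) z ≤ (K * ‖z‖) * (24 / (k ^ 2 * ‖z‖ ^ 2)) :=
          mul_le_mul hval (lap_cutoff_le hk_pos hz hz_one) (lap_cutoff_nonneg hk_pos hz)
            (by positivity)
      _ = 24 * K / (k * ‖z‖) / k := by field_simp
      _ ≤ 24 * K / (k * ‖z‖) := div_le_self (by positivity) hk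
  have gradient_term (i : Fin 2) : |dirDeriv (EuclideanSpace.single i 1) ζ z *
      dirDeriv (EuclideanSpace.single i 1) (cutoff k) z| ≤ 6 * K / (k * ‖z‖) := by
    rw [abs_mul]
    calc _ ≤ K * (6 * ‖(EuclideanSpace.single i 1 : Plane)‖ / (k * ‖z‖)) :=
          mul_le_mul (hderiv i) (abs_dirDeriv_cutoff_le hk_pos _ hz hz_one) (abs_nonneg _) hK
      _ = 6 * K / (k * ‖z‖) := by rw [PiLp.norm_single, norm_one]; ring
  rw [lap_mul hζ (contDiff_cutoff k).contDiffAt, add_sub_cancel_right, Fin.sum_univ_two]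
  calc _ ≤ 24 * K / (k * ‖z‖) + 2 * (6 * K / (k * ‖z‖) + 6 * K / (k * ‖z‖)) := by
        refine (abs_add_le _ _).trans (add_le_add lap_term ?_)
        rw [abs_mul, abs_two]
        exact mul_le_mul_of_nonneg_left
          ((abs_add_le _ _).trans (add_le_add (gradient_term 0) (gradient_term 1))) zero_le_two
    _ = 48 * K / ‖z‖ * k⁻¹ := by field_simp; ring

theorem tendsto_lap_mul_cutoff (hζ : ContDiffAt ℝ 2 ζ z) (hz : z ≠ 0) (hz_one : ‖z‖ ≤ 1)
    (hval : |ζ z| ≤ K * ‖z‖)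
    (hderiv : ∀ i, |dirDeriv (EuclideanSpace.single i 1) ζ z| ≤ K) :
    Tendsto (fun k : ℝ => lap (fun w => ζ w * cutoff k w) z) atTop (𝓝 (lap ζ z)) := by
  have hrest : Tendsto
      (fun k => lap (fun w => ζ w * cutoff k w) z - cutoff k z * lap ζ z) atTop (𝓝 0) := by
    refine squeeze_zero_norm' ?_ (by
      simpa using tendsto_inv_atTop_zero.const_mul (48 * K / ‖z‖))
    filter_upwards [eventually_ge_atTop 1] with k hk
      using abs_lap_mul_cutoff_sub_le hζ hk hz hz_one hval hderiv
  simpa using hrest.add ((tendsto_cutoff hz).mul_const (lap ζ z))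

theorem abs_lap_mul_cutoff_le (hζ : ContDiffAt ℝ 2 ζ z) (hk : 1 ≤ k) (hz : z ≠ 0)
    (hz_one : ‖z‖ ≤ 1) (hval : |ζ z| ≤ K * ‖z‖)
    (hderiv : ∀ i, |dirDeriv (EuclideanSpace.single i 1) ζ z| ≤ K) (hlap : |lap ζ z| ≤ K) :
    |lap (fun w => ζ w * cutoff k w) z| ≤ 49 * K / ‖z‖ := by
  have hK : 0 ≤ K := (abs_nonneg _).trans hlap
  have hrest : |lap (fun w => ζ w * cutoff k w) z - cutoff k z * lap ζ z| ≤ 48 * K / ‖z‖ :=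
    (abs_lap_mul_cutoff_sub_le hζ hk hz hz_one hval hderiv).trans
      (mul_le_of_le_one_right (by positivity) (inv_le_one_of_one_le₀ hk))
  have hmain : |cutoff k z * lap ζ z| ≤ K / ‖z‖ := by
    rw [abs_mul, abs_of_nonneg (cutoff_nonneg (by linarith) z)]
    calc cutoff k z * |lap ζ z| ≤ 1 * K :=
          mul_le_mul (cutoff_le_one (by linarith) hz_one) hlap (abs_nonneg _) zero_le_one
      _ ≤ K / ‖z‖ := by
          rw [one_mul]
          exact le_div_self hK (norm_pos_iff.2 hz) hz_one
  calc |lap (fun w => ζ w * cutoff k w) z|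
      = |(lap (fun w => ζ w * cutoff k w) z - cutoff k z * lap ζ z) + cutoff k z * lap ζ z| := by
        rw [sub_add_cancel]
    _ ≤ 48 * K / ‖z‖ + K / ‖z‖ := (abs_add_le _ _).trans (add_le_add hrest hmain)
    _ = 49 * K / ‖z‖ := by ring

end TestFunction

namespace IsPuncturedSuperharmonic

variable {ψ : Plane → ℝ} {r : ℝ}

theorem tendsto_integral_mul_lap_mul_cutoff (h : IsPuncturedSuperharmonic ψ r)
    {ζ : Plane → ℝ} (hζ : ContDiff ℝ 2 ζ) (hζ_zero : ζ 0 = 0) :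
    Tendsto (fun k : ℝ => ∫ z, ψ z * lap (fun w => ζ w * cutoff k w) z) atTop
      (𝓝 (∫ z, ψ z * lap ζ z)) := by
  obtain ⟨K, -, hbound⟩ := exists_bound_unitBall hζ hζ_zero
  refine tendsto_integral_filter_of_dominated_convergence (fun z => 49 * K * (ψ z / ‖z‖))
    (Eventually.of_forall fun k =>
      (h.integrable_mul_lap_mul_cutoff k fun z _ => hζ.contDiffAt).aestronglyMeasurable)
    ?_ (h.integrable_div_norm.const_mul _) ?_
  · filter_upwards [eventually_ge_atTop 1] with k hk
    filter_upwards [volume.ae_ne 0] with z hz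
    rcases lt_or_ge 1 ‖z‖ with hz_far | hz_one
    · simp [h.supp z (by linarith)]
    obtain ⟨hval, hderiv, hlap⟩ := hbound z hz_one
    rw [Real.norm_eq_abs, abs_mul, abs_of_nonneg (h.nonneg z hz)]
    calc _ ≤ ψ z * (49 * K / ‖z‖) := mul_le_mul_of_nonneg_left
          (abs_lap_mul_cutoff_le hζ.contDiffAt hk hz hz_one hval hderiv hlap) (h.nonneg z hz)
      _ = _ := by ring
  · filter_upwards [volume.ae_ne 0] with z hz
    rcases lt_or_ge 1 ‖z‖ with hz_far | hz_one
    · simp [h.supp z (by linarith)]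
    obtain ⟨hval, hderiv, -⟩ := hbound z hz_one
    exact (tendsto_lap_mul_cutoff hζ.contDiffAt hz hz_one hval hderiv).const_mul _

theorem tendsto_integral_lap_mul_mul_cutoff (h : IsPuncturedSuperharmonic ψ r)
    {ζ : Plane → ℝ} (hζ : ContDiff ℝ 2 ζ) (hζ_zero : ζ 0 = 0) :
    Tendsto (fun k : ℝ => ∫ z, lap ψ z * (ζ z * cutoff k z)) atTop
      (𝓝 (∫ z, lap ψ z * ζ z)) := by
  obtain ⟨K, hK, hbound⟩ := exists_bound_unitBall hζ hζ_zero
  refine tendsto_integral_filter_of_dominated_convergence (fun z => |lap ψ z| * K)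
    (Eventually.of_forall fun k => h.integrable_lap.aestronglyMeasurable.mul
      (hζ.continuous.mul (contDiff_cutoff k).continuous).aestronglyMeasurable)
    ?_ (h.integrable_lap.abs.mul_const _) ?_
  · filter_upwards [eventually_ge_atTop 1] with k hk
    refine Eventually.of_forall fun z => ?_
    rcases lt_or_ge 1 ‖z‖ with hz_far | hz_one
    · simp [h.lap_eq_zero (by linarith : 1 / 2 < ‖z‖)]
    have hk_pos : 0 < k := by linarith
    rw [Real.norm_eq_abs, abs_mul, abs_mul, abs_of_nonneg (cutoff_nonneg hk_pos z)]
    refine mul_le_mul_of_nonneg_left ?_ (abs_nonneg _)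
    calc |ζ z| * cutoff k z ≤ K * ‖z‖ * 1 :=
          mul_le_mul (hbound z hz_one).1 (cutoff_le_one hk_pos hz_one)
            (cutoff_nonneg hk_pos z) (by positivity)
      _ ≤ K := by
          rw [mul_one]
          exact mul_le_of_le_one_right hK hz_one
  · filter_upwards [volume.ae_ne 0] with z hz
    simpa using ((tendsto_cutoff hz).const_mul (ζ z)).const_mul (lap ψ z)

-- Thus the distributional Laplacian of `ψ` is `lap ψ` plus a multiple of the Dirac mass at `0`.
theorem integral_mul_lap_of_apply_zero (h : IsPuncturedSuperharmonic ψ r) {ζ : Plane → ℝ}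
    (hζ : ContDiff ℝ 2 ζ) (hζ_zero : ζ 0 = 0) :
    ∫ z, ψ z * lap ζ z = ∫ z, lap ψ z * ζ z := by
  refine tendsto_nhds_unique (h.tendsto_integral_mul_lap_mul_cutoff hζ hζ_zero) ?_
  simp only [h.integral_mul_lap_mul_cutoff _ fun _ _ => hζ.contDiffAt]
  exact h.tendsto_integral_lap_mul_mul_cutoff hζ hζ_zero

end IsPuncturedSuperharmonic

/-! ### The logarithmic kernel and its regularization -/

/-- The logarithmic kernel `log ‖x‖` regularized at scale `√ε`; it is smooth for `ε > 0` and
decreases to the kernel as `ε → 0⁺`. -/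
noncomputable def regLog {E : Type*} [NormedAddCommGroup E] (ε : ℝ) (x : E) : ℝ :=
  Real.log (‖x‖ ^ 2 + ε) / 2

/-- The logarithmic potential of the density `F` with respect to `μ`, with the sign for which the
potential of a positive density in the plane is subharmonic. -/
noncomputable def logPotential {E : Type*} [NormedAddCommGroup E] [MeasurableSpace E]
    (μ : Measure E) (F : E → ℝ) (z : E) : ℝ :=
  ∫ w, F w * Real.log ‖z - w‖ ∂μ

section RegLog

variable {E : Type*} [NormedAddCommGroup E] {ε ρ : ℝ} {x : E}

theorem log_norm_le_regLog (hε : 0 ≤ ε) (hx : x ≠ 0) : Real.log ‖x‖ ≤ regLog ε x := by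
  have : 0 < ‖x‖ := norm_pos_iff.2 hx
  have hlog : Real.log (‖x‖ ^ 2) ≤ Real.log (‖x‖ ^ 2 + ε) :=
    Real.log_le_log (by positivity) (by linarith)
  rw [Real.log_pow] at hlog
  push_cast at hlog
  rw [regLog]
  linarith

theorem regLog_le_norm (hε : 0 < ε) (hε_one : ε ≤ 1) (x : E) : regLog ε x ≤ ‖x‖ := by
  have hlog : Real.log (‖x‖ ^ 2 + ε) ≤ Real.log ((‖x‖ + 1) ^ 2) :=
    Real.log_le_log (by positivity) (by linarith [norm_nonneg x])
  rw [Real.log_pow] at hlog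
  push_cast at hlog
  rw [regLog]
  linarith [Real.log_le_sub_one_of_pos (show 0 < ‖x‖ + 1 by positivity)]

theorem abs_regLog_le (hε : 0 < ε) (hε_one : ε ≤ 1) (hx : x ≠ 0) :
    |regLog ε x| ≤ |Real.log ‖x‖| + ‖x‖ := by
  have hlower := log_norm_le_regLog hε.le hx
  have hupper := regLog_le_norm hε hε_one x
  rw [abs_le]
  constructor
  · linarith [neg_abs_le (Real.log ‖x‖), norm_nonneg x]
  · linarith [abs_nonneg (Real.log ‖x‖)]

theorem tendsto_regLog (hx : x ≠ 0) :
    Tendsto (fun ε => regLog ε x) (𝓝[>] 0) (𝓝 (Real.log ‖x‖)) := by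
  have hcont : ContinuousAt (fun ε => regLog ε x) 0 := by
    refine ContinuousAt.div_const (ContinuousAt.log (by fun_prop) ?_) 2
    simpa using hx
  have hzero : regLog 0 x = Real.log ‖x‖ := by
    rw [regLog, add_zero, Real.log_pow]
    push_cast
    ring
  rw [← hzero]
  exact hcont.tendsto.mono_left nhdsWithin_le_nhds

theorem contDiff_regLog [InnerProductSpace ℝ E] (hε : 0 < ε) (n : ℕ∞) :
    ContDiff ℝ n (regLog ε : E → ℝ) := by
  refine ContDiff.div_const (ContDiff.log ?_ fun x => by positivity) 2
  exact (contDiff_norm_sq ℝ).add contDiff_const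

theorem continuous_regLog (hε : 0 < ε) : Continuous (regLog ε : E → ℝ) :=
  (Continuous.log (by fun_prop) fun x => by positivity).div_const 2

theorem eventually_pos_and_le_one : ∀ᶠ ε : ℝ in 𝓝[>] 0, 0 < ε ∧ ε ≤ 1 :=
  eventually_nhdsWithin_of_forall (fun _ hε => hε) |>.and
    (nhdsWithin_le_nhds (Iic_mem_nhds one_pos))

variable [MeasurableSpace E] {μ : Measure E} {F : E → ℝ} {z : E}

theorem ae_abs_mul_regLog_le (hF_supp : ∀ w, ρ < ‖w‖ → F w = 0) (hε : 0 < ε) (hε_one : ε ≤ 1)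
    (z : E) [NullSingletonClass μ] :
    ∀ᵐ w ∂μ, |F w * regLog ε (z - w)| ≤ |F w * Real.log ‖z - w‖| + |F w| * (‖z‖ + ρ) := by
  filter_upwards [μ.ae_ne z] with w hw
  rcases lt_or_ge ρ ‖w‖ with hw_far | hw_near
  · simp [hF_supp w hw_far]
  rw [abs_mul, abs_mul, ← mul_add]
  refine mul_le_mul_of_nonneg_left ?_ (abs_nonneg _)
  linarith [abs_regLog_le hε hε_one (sub_ne_zero.2 hw.symm), norm_sub_le z w]

variable [BorelSpace E]

theorem aestronglyMeasurable_mul_log_norm_sub (hF : AEStronglyMeasurable F μ) (z : E) :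
    AEStronglyMeasurable (fun w => F w * Real.log ‖z - w‖) μ :=
  hF.mul (Measurable.aestronglyMeasurable (by fun_prop))

theorem aestronglyMeasurable_mul_regLog (hF : AEStronglyMeasurable F μ) (hε : 0 < ε) (z : E) :
    AEStronglyMeasurable (fun w => F w * regLog ε (z - w)) μ :=
  hF.mul ((continuous_regLog hε).comp (by fun_prop)).aestronglyMeasurable

variable [NullSingletonClass μ]

theorem integrable_mul_regLog (hF : Integrable F μ) (hF_supp : ∀ w, ρ < ‖w‖ → F w = 0)
    (hz : Integrable (fun w => F w * Real.log ‖z - w‖) μ) (hε : 0 < ε) (hε_one : ε ≤ 1) :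
    Integrable (fun w => F w * regLog ε (z - w)) μ :=
  (hz.abs.add (hF.abs.mul_const _)).mono'
    (aestronglyMeasurable_mul_regLog hF.aestronglyMeasurable hε z)
    (ae_abs_mul_regLog_le hF_supp hε hε_one z)

theorem tendsto_integral_mul_regLog (hF : Integrable F μ) (hF_supp : ∀ w, ρ < ‖w‖ → F w = 0)
    (hz : Integrable (fun w => F w * Real.log ‖z - w‖) μ) :
    Tendsto (fun ε => ∫ w, F w * regLog ε (z - w) ∂μ) (𝓝[>] 0) (𝓝 (logPotential μ F z)) := by
  refine tendsto_integral_filter_of_dominated_convergence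
    (fun w => |F w * Real.log ‖z - w‖| + |F w| * (‖z‖ + ρ)) ?_ ?_
    (hz.abs.add (hF.abs.mul_const _)) ?_
  · filter_upwards [self_mem_nhdsWithin] with ε hε
      using aestronglyMeasurable_mul_regLog hF.aestronglyMeasurable hε z
  · filter_upwards [eventually_pos_and_le_one] with ε hε
      using ae_abs_mul_regLog_le hF_supp hε.1 hε.2 z
  · filter_upwards [μ.ae_ne z] with w hw
      using (tendsto_regLog (sub_ne_zero.2 hw.symm)).const_mul (F w)

end RegLog

section Fundamental

variable {ε : ℝ} {z : Plane}

/-- The Laplacian of `regLog 1` in the plane; its rescalings approximate a Dirac mass. -/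
noncomputable def bubble (x : Plane) : ℝ := 2 / (1 + ‖x‖ ^ 2) ^ 2

theorem lap_regLog (hε : 0 < ε) (x : Plane) :
    lap (regLog ε) x = (√ε)⁻¹ ^ 2 * bubble ((√ε)⁻¹ • x) := by
  have first_order (q : ℝ) (hq : 0 < q + ε) :
      HasDerivAt (fun q => Real.log (q + ε) / 2) ((q + ε)⁻¹ / 2) q := by
    simpa using (((hasDerivAt_id q).add_const ε).log hq.ne').div_const 2
  have hx : 0 < ‖x‖ ^ 2 + ε := by positivity
  have second_order := (((hasDerivAt_id (‖x‖ ^ 2)).add_const ε).inv hx.ne').div_const 2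
  have hnear : ∀ᶠ q in 𝓝 (‖x‖ ^ 2), 0 < q + ε :=
    (by fun_prop : ContinuousAt (fun q : ℝ => q + ε) (‖x‖ ^ 2)).eventually (lt_mem_nhds hx)
  refine (lap_comp_norm_sq (hnear.mono first_order) second_order).trans ?_
  rw [bubble, norm_smul, Real.norm_of_nonneg (by positivity), mul_pow, inv_pow, Real.sq_sqrt hε.le]
  simp only [id_eq]
  field_simp
  ring

theorem bubble_pos (x : Plane) : 0 < bubble x := by
  unfold bubble
  positivity

theorem integrable_bubble : Integrable bubble := by
  have hpow := (integrable_rpow_neg_one_add_norm_sq (E := Plane) (μ := volume) (r := 4)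
    (by rw [finrank_euclideanSpace_fin]; norm_num)).const_mul 2
  refine hpow.congr (Eventually.of_forall fun x => ?_)
  have hx : (0 : ℝ) ≤ 1 + ‖x‖ ^ 2 := by positivity
  simp only [bubble]
  rw [show (-4 / 2 : ℝ) = -((2 : ℕ) : ℝ) by norm_num, Real.rpow_neg hx, Real.rpow_natCast,
    div_eq_mul_inv]

theorem integral_bubble_pos : 0 < ∫ x, bubble x := by
  rw [integral_pos_iff_support_of_nonneg (fun x => (bubble_pos x).le) integrable_bubble,
    Function.support_eq_univ fun x => (bubble_pos x).ne']
  exact isOpen_univ.measure_pos _ Set.univ_nonempty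

theorem tendsto_norm_sq_mul_bubble :
    Tendsto (fun x : Plane => ‖x‖ ^ 2 * bubble x) (Bornology.cobounded Plane) (𝓝 0) := by
  have hdecay : Tendsto (fun x : Plane => 2 / (1 + ‖x‖ ^ 2)) (Bornology.cobounded Plane) (𝓝 0) :=
    tendsto_const_nhds.div_atTop (tendsto_atTop_add_const_left _ _
      ((tendsto_pow_atTop two_ne_zero).comp tendsto_norm_cobounded_atTop))
  refine squeeze_zero (fun x => mul_nonneg (by positivity) (bubble_pos x).le) (fun x => ?_) hdecay
  rw [bubble, mul_div_assoc', div_le_div_iff₀ (by positivity) (by positivity)]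
  nlinarith [sq_nonneg ‖x‖]

theorem tendsto_integral_mul_lap_regLog {g : Plane → ℝ} (hg : Integrable g)
    (hz : ContinuousAt g z) :
    Tendsto (fun ε => ∫ w, g w * lap (regLog ε) (z - w)) (𝓝[>] 0)
      (𝓝 ((∫ x, bubble x) * g z)) := by
  have hmass := integral_bubble_pos
  have hpeak := tendsto_integral_comp_smul_smul_of_integrable' (μ := (volume : Measure Plane))
    (φ := fun x => bubble x / ∫ y, bubble y) (fun x => (div_pos (bubble_pos x) hmass).le)
    (by rw [integral_div, div_self hmass.ne'])
    (by
      rw [finrank_euclideanSpace_fin]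
      simpa [mul_div_assoc] using tendsto_norm_sq_mul_bubble.div_const (∫ y, bubble y)) hg hz
  have hscale : Tendsto (fun ε => (√ε)⁻¹) (𝓝[>] 0) atTop := by
    refine tendsto_inv_nhdsGT_zero.comp (tendsto_nhdsWithin_iff.2 ⟨?_, ?_⟩)
    · simpa using Real.continuous_sqrt.continuousAt.tendsto.mono_left
        (nhdsWithin_le_nhds (a := (0 : ℝ)))
    · exact eventually_nhdsWithin_of_forall fun ε hε => Real.sqrt_pos.2 hε
  refine ((hpeak.comp hscale).const_mul (∫ x, bubble x)).congr' ?_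
  filter_upwards [self_mem_nhdsWithin] with ε hε
  simp only [Function.comp, ← integral_const_mul, lap_regLog hε, finrank_euclideanSpace_fin,
    smul_eq_mul]
  congr with w
  field_simp

end Fundamental

section Singularity

variable {E : Type*} [NormedAddCommGroup E]

theorem abs_log_le_inv_mul_rpow_neg {t s : ℝ} (ht : 0 ≤ t) (ht_one : t ≤ 1) (hs : 0 < s) :
    |Real.log t| ≤ s⁻¹ * t ^ (-s) := by
  rcases ht.eq_or_lt with rfl | ht
  · rw [Real.log_zero, abs_zero]
    positivity
  have hlog := (Real.abs_log_mul_self_rpow_lt t s ht ht_one hs).le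
  rw [abs_mul, abs_of_pos (Real.rpow_pos_of_pos ht _), ← le_div_iff₀ (by positivity)] at hlog
  rwa [Real.rpow_neg ht.le, ← div_eq_mul_inv, ← one_div]

theorem abs_log_le_abs_log_add {t a b : ℝ} (ha : 0 < a) (hat : a ≤ t) (htb : t ≤ b) :
    |Real.log t| ≤ |Real.log a| + b := by
  have ht : 0 < t := ha.trans_le hat
  have hlower := Real.log_le_log ha hat
  have hupper := Real.log_le_sub_one_of_pos ht
  rw [abs_le]
  constructor
  · linarith [neg_abs_le (Real.log a)]
  · linarith [abs_nonneg (Real.log a)]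

theorem preimage_sub_left_ball_zero (z : E) (r : ℝ) : (z - ·) ⁻¹' ball 0 r = ball z r := by
  ext w
  simp [dist_eq_norm, norm_sub_rev]

variable [MeasurableSpace E] [BorelSpace E] {μ : Measure E}
  [NormedSpace ℝ E] [FiniteDimensional ℝ E] [μ.IsAddHaarMeasure]

theorem integrableOn_ball_comp_sub_left {g : E → ℝ} {r : ℝ} (z : E) :
    IntegrableOn (fun w => g (z - w)) (ball z r) μ ↔ IntegrableOn g (ball 0 r) μ := by
  rw [← preimage_sub_left_ball_zero]
  exact (Measure.measurePreserving_sub_left μ z).integrableOn_comp_preimage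
    (Homeomorph.subLeft z).measurableEmbedding

theorem setIntegral_ball_comp_sub_left (g : E → ℝ) (z : E) (r : ℝ) :
    ∫ w in ball z r, g (z - w) ∂μ = ∫ x in ball 0 r, g x ∂μ := by
  rw [← preimage_sub_left_ball_zero]
  exact (Measure.measurePreserving_sub_left μ z).setIntegral_preimage_emb
    (Homeomorph.subLeft z).measurableEmbedding g _

variable [Nontrivial E]

theorem integrableOn_ball_norm_rpow_neg {α : ℝ} (hα : α < Module.finrank ℝ E) (r : ℝ) :
    IntegrableOn (fun x : E => ‖x‖ ^ (-α)) (ball 0 r) μ := by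
  refine integrableOn_ball_of_norm_le_rpow (C := 1) Module.finrank_pos hα
    (Eventually.of_forall fun x => ?_) (Measurable.aestronglyMeasurable (by fun_prop))
  rw [one_mul, Real.norm_of_nonneg (by positivity)]

theorem integrableOn_ball_log_norm :
    IntegrableOn (fun x : E => Real.log ‖x‖) (ball 0 1) μ := by
  have hdim : (1 / 2 : ℝ) < Module.finrank ℝ E := by
    have : (1 : ℝ) ≤ Module.finrank ℝ E := by exact_mod_cast Module.finrank_pos (R := ℝ) (M := E)
    linarith
  refine ((integrableOn_ball_norm_rpow_neg hdim 1).const_mul (1 / 2)⁻¹).mono'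
    (Measurable.aestronglyMeasurable (by fun_prop)) ?_
  filter_upwards [ae_restrict_mem measurableSet_ball] with x hx
    using abs_log_le_inv_mul_rpow_neg (norm_nonneg x) (mem_ball_zero_iff.1 hx).le (by norm_num)

theorem integrable_mul_log_norm_sub {F : E → ℝ} {ρ : ℝ} (hF : Integrable F μ)
    (hF_supp : ∀ w, ρ < ‖w‖ → F w = 0) {z : E} (hz : ContinuousAt F z) :
    Integrable (fun w => F w * Real.log ‖z - w‖) μ := by
  have hmeas := aestronglyMeasurable_mul_log_norm_sub hF.aestronglyMeasurable z
  obtain ⟨δ, hδ, hbound⟩ := Metric.eventually_nhds_iff_ball.1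
    (hz.abs.eventually (gt_mem_nhds (lt_add_one |F z|)))
  have hnear : IntegrableOn (fun w => F w * Real.log ‖z - w‖) (ball z (min δ 1)) μ := by
    have hlog : IntegrableOn (fun w => Real.log ‖z - w‖) (ball z (min δ 1)) μ :=
      ((integrableOn_ball_comp_sub_left z).2 integrableOn_ball_log_norm).mono_set
        (ball_subset_ball (min_le_right _ _))
    refine hlog.bdd_mul (c := |F z| + 1) hF.aestronglyMeasurable.restrict ?_
    filter_upwards [ae_restrict_mem measurableSet_ball] with w hw
      using (hbound w (ball_subset_ball (min_le_left _ _) hw)).le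
  have hfar : IntegrableOn (fun w => F w * Real.log ‖z - w‖) (ball z (min δ 1))ᶜ μ := by
    refine (hF.abs.mul_const (|Real.log (min δ 1)| + (‖z‖ + ρ))).integrableOn.mono'
      hmeas.restrict ?_
    filter_upwards [ae_restrict_mem measurableSet_ball.compl] with w hw
    rcases lt_or_ge ρ ‖w‖ with hw_far | hw_near
    · simp [hF_supp w hw_far]
    rw [Real.norm_eq_abs, abs_mul]
    refine mul_le_mul_of_nonneg_left (abs_log_le_abs_log_add (lt_min hδ one_pos) ?_ ?_)
      (abs_nonneg _)
    · exact not_lt.1 fun hlt => hw (by rwa [mem_ball', dist_eq_norm])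
    · linarith [norm_sub_le z w]
  rw [← integrableOn_univ, ← Set.union_compl_self (ball z (min δ 1))]
  exact hnear.union hfar

end Singularity

namespace IsPuncturedSuperharmonic

variable {ψ : Plane → ℝ} {r : ℝ} {z : Plane}

theorem integrable_lap_mul_log (h : IsPuncturedSuperharmonic ψ r) (hz : z ≠ 0) :
    Integrable fun w => lap ψ w * Real.log ‖z - w‖ :=
  integrable_mul_log_norm_sub h.integrable_lap (fun _ => h.lap_eq_zero)
    (h.continuousAt_lap_of_ne hz)

theorem integral_mul_lap_regLog (h : IsPuncturedSuperharmonic ψ r) (hz : z ≠ 0) {ε : ℝ}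
    (hε : 0 < ε) (hε_one : ε ≤ 1) :
    ∫ w, ψ w * lap (regLog ε) (z - w) =
      (∫ w, lap ψ w * regLog ε (z - w)) - (∫ w, lap ψ w) * regLog ε z := by
  have hsmooth : ContDiff ℝ 2 fun w => regLog ε (z - w) :=
    (contDiff_regLog hε 2).comp (contDiff_const.sub contDiff_id)
  have hweak := h.integral_mul_lap_of_apply_zero (ζ := fun w => regLog ε (z - w) - regLog ε z)
    (hsmooth.sub contDiff_const) (by simp)
  simp only [lap_sub_const, lap_comp_const_sub] at hweak
  rw [hweak, ← integral_mul_const, ← integral_sub (integrable_mul_regLog h.integrable_lap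
    (fun _ => h.lap_eq_zero) (h.integrable_lap_mul_log hz) hε hε_one)
    (h.integrable_lap.mul_const _)]
  simp only [mul_sub]

theorem integral_bubble_mul_eq (h : IsPuncturedSuperharmonic ψ r) (hz : z ≠ 0) :
    (∫ x, bubble x) * ψ z =
      logPotential volume (lap ψ) z - (∫ w, lap ψ w) * Real.log ‖z‖ := by
  refine tendsto_nhds_unique
    (tendsto_integral_mul_lap_regLog h.integrable (h.smooth z hz).continuousAt) ?_
  refine ((tendsto_integral_mul_regLog h.integrable_lap (fun _ => h.lap_eq_zero)
    (h.integrable_lap_mul_log hz)).sub ((tendsto_regLog hz).const_mul (∫ w, lap ψ w))).congr' ?_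
  filter_upwards [eventually_pos_and_le_one] with ε hε
    using (h.integral_mul_lap_regLog hz hε.1 hε.2).symm

end IsPuncturedSuperharmonic

/-! ### Growth at the singularity -/

theorem tendsto_setIntegral_ball_zero {X : Type*} [MetricSpace X] [ProperSpace X]
    [MeasurableSpace X] [BorelSpace X] {μ : Measure X} [IsFiniteMeasureOnCompacts μ]
    [NullSingletonClass μ] {F : X → ℝ} (hF : Integrable F μ) (x : X) :
    Tendsto (fun δ => ∫ w in ball x δ, F w ∂μ) (𝓝[>] 0) (𝓝 0) := by
  refine hF.tendsto_setIntegral_nhds_zero ?_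
  have hthick : Tendsto (fun δ => μ (cthickening δ {x})) (𝓝[>] 0) (𝓝 0) := by
    simpa using (tendsto_measure_cthickening_of_isCompact (μ := μ)
      (isCompact_singleton (x := x))).mono_left nhdsWithin_le_nhds
  refine tendsto_of_tendsto_of_tendsto_of_le_of_le' tendsto_const_nhds hthick
    (Eventually.of_forall fun _ => zero_le) ?_
  filter_upwards [self_mem_nhdsWithin] with δ hδ
  rw [cthickening_singleton x (le_of_lt hδ)]
  exact measure_mono ball_subset_closedBall

theorem exists_weighted_max {X : Type*} [PseudoMetricSpace X] [ProperSpace X] {u : X → ℝ} {x : X}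
    {s : ℝ} (hs : 0 < s) (hu : ContinuousOn u (closedBall x s)) :
    ∃ y ∈ ball x s, u x + Real.log s ≤ u y + Real.log (s - dist y x) ∧
      ∀ w ∈ ball y ((s - dist y x) / 2), u w ≤ u y + Real.log 2 := by
  have hcont : ContinuousOn (fun w => (s - dist w x) * Real.exp (u w)) (closedBall x s) := by
    fun_prop
  obtain ⟨y, -, hmax⟩ := (isCompact_closedBall x s).exists_isMaxOn
    ⟨x, mem_closedBall_self hs.le⟩ hcont
  have hdist : 0 < s - dist y x := by
    have hpos : 0 < s * Real.exp (u x) := by positivity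
    have hcenter : s * Real.exp (u x) ≤ (s - dist y x) * Real.exp (u y) := by
      simpa using hmax (mem_closedBall_self hs.le)
    exact pos_of_mul_pos_left (hpos.trans_le hcenter) (Real.exp_pos _).le
  have hlog : ∀ w, 0 < s - dist w x →
      u w + Real.log (s - dist w x) ≤ u y + Real.log (s - dist y x) := fun w hw => by
    have hle := Real.log_le_log (mul_pos hw (Real.exp_pos (u w))) (hmax (sub_pos.1 hw).le)
    rw [Real.log_mul hw.ne' (Real.exp_pos _).ne', Real.log_mul hdist.ne' (Real.exp_pos _).ne',
      Real.log_exp, Real.log_exp] at hle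
    linarith
  refine ⟨y, sub_pos.1 hdist, by simpa using hlog x (by simpa using hs), fun w hw => ?_⟩
  have hw_dist : (s - dist y x) / 2 ≤ s - dist w x := by
    linarith [dist_triangle w y x, mem_ball.1 hw]
  have hhalf := Real.log_le_log (half_pos hdist) hw_dist
  rw [Real.log_div hdist.ne' two_ne_zero] at hhalf
  linarith [hlog w ((half_pos hdist).trans_le hw_dist)]

theorem exists_radius {d M : ℝ} (hd : 0 < d) (hd_le : d / 2 ≤ 1) (hM : 0 ≤ M) :
    ∃ ρ, 0 < ρ ∧ ρ ≤ d / 2 ∧ Real.exp M * ρ ≤ 1 ∧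
      -Real.log ρ ≤ Real.log 2 - Real.log d + M := by
  refine ⟨d / 2 * Real.exp (-M), by positivity, ?_, ?_, ?_⟩
  · exact mul_le_of_le_one_right (by positivity) (Real.exp_le_one_iff.2 (by linarith))
  · rw [mul_left_comm, ← Real.exp_add, add_neg_cancel, Real.exp_zero, mul_one]
    exact hd_le
  · rw [Real.log_mul (by positivity) (Real.exp_pos _).ne', Real.log_exp,
      Real.log_div hd.ne' two_ne_zero]
    linarith

theorem setIntegral_le_setIntegral_of_subset {α : Type*} [MeasurableSpace α] {μ : Measure α}
    {f g : α → ℝ} {s t : Set α} (ht : MeasurableSet t) (hts : t ⊆ s) (hf : IntegrableOn f t μ)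
    (hg : IntegrableOn g s μ) (hfg : ∀ᵐ x ∂μ, x ∈ t → f x ≤ g x)
    (hg_nonneg : 0 ≤ᵐ[μ.restrict s] g) :
    ∫ x in t, f x ∂μ ≤ ∫ x in s, g x ∂μ :=
  (setIntegral_mono_on_ae hf (hg.mono_set hts) ht hfg).trans
    (setIntegral_mono_set hg hg_nonneg hts.eventuallyLE)

theorem mul_exp_le_of_le_add_log_two {C a b : ℝ} (hC : 0 ≤ C) (h : a ≤ b + Real.log 2) :
    C * Real.exp a ≤ 2 * C * Real.exp b := by
  calc C * Real.exp a ≤ C * Real.exp (b + Real.log 2) := by gcongr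
    _ = 2 * C * Real.exp b := by
        rw [Real.exp_add, Real.exp_log two_pos]
        ring

section Potential

variable {E : Type*} [NormedAddCommGroup E] [MeasurableSpace E] [BorelSpace E] {μ : Measure E}
  {F : E → ℝ} {z : E} {ρ δ D : ℝ}

theorem abs_logPotential_sub_setIntegral_ball_le (hF : Integrable F μ)
    (hF_supp : ∀ w, ρ < ‖w‖ → F w = 0) (hz : Integrable (fun w => F w * Real.log ‖z - w‖) μ)
    (hδ : 0 < δ) (hzδ : ‖z‖ < δ / 2) :
    |logPotential μ F z - ∫ w in ball 0 δ, F w * Real.log ‖z - w‖ ∂μ| ≤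
      ∫ w, |F w| * (|Real.log (δ / 2)| + (δ / 2 + ρ)) ∂μ := by
  rw [logPotential, ← integral_add_compl measurableSet_ball hz, add_sub_cancel_left]
  have hfar : ∀ w ∈ (ball (0 : E) δ)ᶜ,
      |F w * Real.log ‖z - w‖| ≤ |F w| * (|Real.log (δ / 2)| + (δ / 2 + ρ)) := fun w hw => by
    rcases lt_or_ge ρ ‖w‖ with hw_far | hw_near
    · simp [hF_supp w hw_far]
    have hw_norm : δ ≤ ‖w‖ := by simpa using hw
    rw [abs_mul]
    refine mul_le_mul_of_nonneg_left (abs_log_le_abs_log_add (half_pos hδ) ?_ ?_) (abs_nonneg _)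
    · linarith [norm_sub_norm_le w z, norm_sub_rev z w]
    · linarith [norm_sub_le z w]
  calc |∫ w in (ball 0 δ)ᶜ, F w * Real.log ‖z - w‖ ∂μ|
      ≤ ∫ w in (ball 0 δ)ᶜ, |F w| * (|Real.log (δ / 2)| + (δ / 2 + ρ)) ∂μ := by
        rw [← Real.norm_eq_abs]
        exact norm_integral_le_of_norm_le (hF.abs.mul_const _).integrableOn
          ((ae_restrict_mem measurableSet_ball.compl).mono hfar)
    _ ≤ _ := by
        refine setIntegral_le_integral (hF.abs.mul_const _) ?_
        refine Eventually.of_forall fun w => ?_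
        rcases lt_or_ge ρ ‖w‖ with hw_far | hw_near
        · simp [hF_supp w hw_far]
        · have : 0 ≤ ρ := (norm_nonneg w).trans hw_near
          exact mul_nonneg (abs_nonneg _) (by positivity)

variable [NormedSpace ℝ E] [FiniteDimensional ℝ E] [Nontrivial E] [μ.IsAddHaarMeasure]

theorem exists_setIntegral_ball_abs_log_norm_le (hdim : 2 ≤ Module.finrank ℝ E) :
    ∃ L, 0 ≤ L ∧ ∀ ρ, 0 < ρ → ρ ≤ 1 → ∫ x in ball (0 : E) ρ, |Real.log ‖x‖| ∂μ ≤ L * ρ := by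
  have hint : IntegrableOn (fun x : E => ‖x‖ ^ (-(3 / 2) : ℝ)) (ball 0 1) μ :=
    integrableOn_ball_norm_rpow_neg
      (lt_of_lt_of_le (by norm_num) (Nat.cast_le.2 hdim : ((2 : ℕ) : ℝ) ≤ _)) 1
  refine ⟨2 * ∫ x in ball (0 : E) 1, ‖x‖ ^ (-(3 / 2) : ℝ) ∂μ,
    mul_nonneg zero_le_two (integral_nonneg fun x => by positivity), fun ρ hρ hρ_one => ?_⟩
  have hsub : ball (0 : E) ρ ⊆ ball 0 1 := ball_subset_ball hρ_one
  have hpoint : ∀ x ∈ ball (0 : E) ρ, |Real.log ‖x‖| ≤ 2 * ρ * ‖x‖ ^ (-(3 / 2) : ℝ) :=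
    fun x hx => by
      have hx_lt : ‖x‖ < ρ := mem_ball_zero_iff.1 hx
      rcases eq_or_ne x 0 with rfl | hx_ne
      · simp [Real.zero_rpow]
      have hsplit : ‖x‖ ^ (-(1 / 2) : ℝ) = ‖x‖ * ‖x‖ ^ (-(3 / 2) : ℝ) := by
        rw [← Real.rpow_one_add' (norm_nonneg x) (by norm_num)]
        norm_num
      refine (abs_log_le_inv_mul_rpow_neg (norm_nonneg x) (by linarith) one_half_pos).trans ?_
      rw [hsplit, one_div, inv_inv, mul_assoc]
      gcongr
  calc ∫ x in ball (0 : E) ρ, |Real.log ‖x‖| ∂μ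
      ≤ ∫ x in ball (0 : E) 1, 2 * ρ * ‖x‖ ^ (-(3 / 2) : ℝ) ∂μ :=
        setIntegral_le_setIntegral_of_subset measurableSet_ball hsub
          (integrableOn_ball_log_norm.mono_set hsub).abs (hint.const_mul _)
          (Eventually.of_forall hpoint) (Eventually.of_forall fun x => by positivity)
    _ = _ := by rw [integral_const_mul, mul_right_comm]

theorem setIntegral_mul_neg_log_le {s : Set E} (hs : MeasurableSet s) (hF : IntegrableOn F s μ)
    (hz : IntegrableOn (fun w => F w * Real.log ‖z - w‖) s μ)
    (hF_nonneg : ∀ᵐ w ∂μ, w ∈ s → 0 ≤ F w) (hF_le : ∀ᵐ w ∂μ, w ∈ s ∩ ball z ρ → F w ≤ D)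
    (hD : 0 ≤ D) (hρ : 0 < ρ) (hρ_one : ρ ≤ 1) :
    ∫ w in s, F w * -Real.log ‖z - w‖ ∂μ ≤
      D * (∫ x in ball (0 : E) ρ, |Real.log ‖x‖| ∂μ) + (∫ w in s, F w ∂μ) * -Real.log ρ := by
  have hlog : IntegrableOn (fun w => |Real.log ‖z - w‖|) (ball z ρ) μ :=
    (integrableOn_ball_comp_sub_left (g := fun x => |Real.log ‖x‖|) z).2
      (integrableOn_ball_log_norm.mono_set (ball_subset_ball hρ_one)).abs
  have hz_neg : IntegrableOn (fun w => F w * -Real.log ‖z - w‖) s μ := by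
    simp only [mul_neg]
    exact Integrable.neg hz
  have hnear : ∫ w in s ∩ ball z ρ, F w * -Real.log ‖z - w‖ ∂μ ≤
      D * ∫ x in ball (0 : E) ρ, |Real.log ‖x‖| ∂μ := by
    rw [← setIntegral_ball_comp_sub_left (fun x => |Real.log ‖x‖|) z, ← integral_const_mul]
    refine setIntegral_le_setIntegral_of_subset (hs.inter measurableSet_ball)
      Set.inter_subset_right (hz_neg.mono_set Set.inter_subset_left) (hlog.const_mul D) ?_
      (Eventually.of_forall fun w => mul_nonneg hD (abs_nonneg _))
    filter_upwards [hF_nonneg, hF_le] with w hw_nonneg hw_le hw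
    exact (mul_le_mul_of_nonneg_left (neg_le_abs _) (hw_nonneg hw.1)).trans
      (mul_le_mul_of_nonneg_right (hw_le hw) (abs_nonneg _))
  have hfar : ∫ w in s \ ball z ρ, F w * -Real.log ‖z - w‖ ∂μ ≤
      (∫ w in s, F w ∂μ) * -Real.log ρ := by
    rw [← integral_mul_const]
    refine setIntegral_le_setIntegral_of_subset (hs.diff measurableSet_ball) Set.sdiff_subset
      (hz_neg.mono_set Set.sdiff_subset) (hF.mul_const _) ?_ ?_
    · filter_upwards [hF_nonneg] with w hw_nonneg hw
      have hle : ρ ≤ ‖z - w‖ := not_lt.1 fun hlt => hw.2 (by rwa [mem_ball', dist_eq_norm])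
      exact mul_le_mul_of_nonneg_left (neg_le_neg (Real.log_le_log hρ hle)) (hw_nonneg hw.1)
    · refine (ae_restrict_iff' hs).2 ?_
      filter_upwards [hF_nonneg] with w hw_nonneg hw
      exact mul_nonneg (hw_nonneg hw) (neg_nonneg.2 (Real.log_nonpos hρ.le hρ_one))
  rw [← integral_inter_add_sdiff measurableSet_ball hz_neg]
  exact add_le_add hnear hfar

end Potential

/-- The coefficient of the logarithmic singularity of `ψ` at the origin; the mass of `bubble` is
the normalizing constant `2π`. -/
noncomputable def logCoeff (ψ : Plane → ℝ) : ℝ := (∫ w, lap ψ w) / ∫ x, bubble x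

theorem eventually_nhdsNE_zero {E : Type*} [NormedAddCommGroup E] {δ : ℝ} (hδ : 0 < δ) :
    ∀ᶠ z : E in 𝓝[≠] 0, z ≠ 0 ∧ ‖z‖ < δ := by
  filter_upwards [self_mem_nhdsWithin, nhdsWithin_le_nhds (ball_mem_nhds (0 : E) hδ)]
    with z hz hzδ using ⟨hz, mem_ball_zero_iff.1 hzδ⟩

theorem tendsto_neg_log_norm {E : Type*} [NormedAddCommGroup E] :
    Tendsto (fun z : E => -Real.log ‖z‖) (𝓝[≠] 0) atTop :=
  tendsto_neg_atBot_atTop.comp (Real.tendsto_log_nhdsGT_zero.comp tendsto_norm_nhdsNE_zero)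

theorem abs_log_sub_log_le {s t : ℝ} (hs : 0 < s) (hlower : s / 2 ≤ t) (hupper : t ≤ 2 * s) :
    |Real.log t - Real.log s| ≤ Real.log 2 := by
  have hlog_lower := Real.log_le_log (half_pos hs) hlower
  have hlog_upper := Real.log_le_log ((half_pos hs).trans_le hlower) hupper
  rw [Real.log_div hs.ne' two_ne_zero] at hlog_lower
  rw [Real.log_mul two_ne_zero hs.ne'] at hlog_upper
  rw [abs_le]
  constructor <;> linarith

namespace IsPuncturedSuperharmonic

variable {ψ : Plane → ℝ} {r C β : ℝ}

theorem exists_abs_sub_setIntegral_ball_le (h : IsPuncturedSuperharmonic ψ r) {δ : ℝ}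
    (hδ : 0 < δ) :
    ∃ K, ∀ z, z ≠ 0 → ‖z‖ < δ / 2 →
      |(∫ x, bubble x) * (ψ z + logCoeff ψ * Real.log ‖z‖) -
        ∫ w in ball 0 δ, lap ψ w * Real.log ‖z - w‖| ≤ K := by
  refine ⟨∫ w, |lap ψ w| * (|Real.log (δ / 2)| + (δ / 2 + 1 / 2)), fun z hz hzδ => ?_⟩
  have hmass : (∫ x, bubble x) * logCoeff ψ = ∫ w, lap ψ w :=
    mul_div_cancel₀ _ integral_bubble_pos.ne'
  have hrepr : (∫ x, bubble x) * (ψ z + logCoeff ψ * Real.log ‖z‖) =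
      logPotential volume (lap ψ) z := by
    rw [mul_add, ← mul_assoc, hmass, h.integral_bubble_mul_eq hz, sub_add_cancel]
  rw [hrepr]
  exact abs_logPotential_sub_setIntegral_ball_le h.integrable_lap (fun _ => h.lap_eq_zero)
    (h.integrable_lap_mul_log hz) hδ hzδ

theorem setIntegral_ball_nonneg (h : IsPuncturedSuperharmonic ψ r) {δ : ℝ} (hδr : δ ≤ r)
    (hδ_half : δ ≤ 1 / 2) {z : Plane} (hz : ‖z‖ < 1 / 2) :
    0 ≤ ∫ w in ball 0 δ, lap ψ w * Real.log ‖z - w‖ := by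
  refine setIntegral_nonneg_of_ae_restrict ((ae_restrict_iff' measurableSet_ball).2 ?_)
  filter_upwards [volume.ae_ne 0] with w hw hwδ
  have hw_norm : ‖w‖ < δ := mem_ball_zero_iff.1 hwδ
  exact mul_nonneg_of_nonpos_of_nonpos (h.superharmonic w hw (by linarith))
    (Real.log_nonpos (norm_nonneg _) (by linarith [norm_sub_le z w]))

theorem lower_growth (h : IsPuncturedSuperharmonic ψ r) :
    ∃ K, ∀ᶠ z in 𝓝[≠] 0, logCoeff ψ * -Real.log ‖z‖ ≤ ψ z + K := by
  have hδ : 0 < min r (1 / 2) := lt_min h.pos (by norm_num)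
  obtain ⟨K, hK⟩ := h.exists_abs_sub_setIntegral_ball_le hδ
  have hmass := integral_bubble_pos
  refine ⟨K / ∫ x, bubble x, ?_⟩
  filter_upwards [eventually_nhdsNE_zero (half_pos hδ)] with z hz
  have hnear := h.setIntegral_ball_nonneg (min_le_left r (1 / 2)) (min_le_right r (1 / 2))
    (z := z) (by linarith [hz.2, min_le_right r (1 / 2)])
  have hK_div : -(ψ z + logCoeff ψ * Real.log ‖z‖) ≤ K / ∫ x, bubble x := by
    rw [le_div_iff₀ hmass]
    linarith [(abs_le.1 (hK z hz.1 hz.2)).1]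
  linarith

theorem setIntegral_ball_le_of_near_max (h : IsPuncturedSuperharmonic ψ r) (hC : 0 ≤ C)
    (hβ : 0 ≤ β) (hexp : ∀ z, z ≠ 0 → ‖z‖ < r → -lap ψ z ≤ C * Real.exp (β * ψ z))
    {δ κ L d : ℝ} (hδr : δ ≤ r) (hκ : ∫ w in ball 0 δ, -lap ψ w ≤ κ) (hL : 0 ≤ L)
    (hlog : ∀ ρ, 0 < ρ → ρ ≤ 1 → ∫ x in ball (0 : Plane) ρ, |Real.log ‖x‖| ≤ L * ρ)
    {z : Plane} (hz : z ≠ 0) (hd : 0 < d) (hd_le : d / 2 ≤ 1)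
    (hmax : ∀ w ∈ ball z (d / 2), β * ψ w ≤ β * ψ z + Real.log 2) :
    ∫ w in ball 0 δ, lap ψ w * Real.log ‖z - w‖ ≤
      2 * C * L + κ * (Real.log 2 - Real.log d + β * ψ z) := by
  -- The radius balances the density bound `2 C exp (β ψ z)` on `ball z ρ` against the mass bound.
  obtain ⟨ρ, hρ, hρd, hρ_exp, hρ_log⟩ :=
    exists_radius hd hd_le (mul_nonneg hβ (h.nonneg z hz))
  have hρ_one : ρ ≤ 1 := hρd.trans hd_le
  have hsuper : ∀ᵐ w : Plane, w ∈ ball 0 δ → 0 ≤ -lap ψ w := by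
    filter_upwards [volume.ae_ne 0] with w hw hwδ
    exact neg_nonneg.2 (h.superharmonic w hw ((mem_ball_zero_iff.1 hwδ).trans_le hδr))
  have hdensity : ∀ᵐ w : Plane, w ∈ ball 0 δ ∩ ball z ρ →
      -lap ψ w ≤ 2 * C * Real.exp (β * ψ z) := by
    filter_upwards [volume.ae_ne 0] with w hw ⟨hwδ, hwρ⟩
    exact (hexp w hw ((mem_ball_zero_iff.1 hwδ).trans_le hδr)).trans
      (mul_exp_le_of_le_add_log_two hC (hmax w (ball_subset_ball hρd hwρ)))
  have hmass_nonneg : 0 ≤ κ := (setIntegral_nonneg_of_ae_restrict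
    ((ae_restrict_iff' measurableSet_ball).2 hsuper)).trans hκ
  calc ∫ w in ball 0 δ, lap ψ w * Real.log ‖z - w‖
      = ∫ w in ball 0 δ, -lap ψ w * -Real.log ‖z - w‖ := by simp only [neg_mul_neg]
    _ ≤ 2 * C * Real.exp (β * ψ z) * (∫ x in ball (0 : Plane) ρ, |Real.log ‖x‖|) +
          (∫ w in ball 0 δ, -lap ψ w) * -Real.log ρ :=
        setIntegral_mul_neg_log_le measurableSet_ball h.integrable_lap.neg.integrableOn
          (by simpa only [neg_mul] using (h.integrable_lap_mul_log hz).fun_neg.integrableOn)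
          hsuper hdensity (by positivity) hρ hρ_one
    _ ≤ 2 * C * Real.exp (β * ψ z) * (L * ρ) + κ * (Real.log 2 - Real.log d + β * ψ z) := by
        have : 0 ≤ -Real.log ρ := neg_nonneg.2 (Real.log_nonpos hρ.le hρ_one)
        gcongr
        exact hlog ρ hρ hρ_one
    _ = 2 * C * L * (Real.exp (β * ψ z) * ρ) + κ * (Real.log 2 - Real.log d + β * ψ z) := by ring
    _ ≤ 2 * C * L + κ * (Real.log 2 - Real.log d + β * ψ z) := by
        gcongr ?_ + _
        exact mul_le_of_le_one_right (by positivity) hρ_exp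

theorem exists_near_max_bound (h : IsPuncturedSuperharmonic ψ r) (hC : 0 ≤ C) (hβ : 0 ≤ β)
    (hexp : ∀ z, z ≠ 0 → ‖z‖ < r → -lap ψ z ≤ C * Real.exp (β * ψ z)) {δ ν : ℝ} (hδ : 0 < δ)
    (hδr : δ ≤ r) (hν : ∫ w in ball 0 δ, -lap ψ w ≤ (∫ x, bubble x) * ν) :
    ∃ K, ∀ z d, z ≠ 0 → ‖z‖ < δ / 2 → 0 < d → d / 2 ≤ 1 →
      (∀ w ∈ ball z (d / 2), β * ψ w ≤ β * ψ z + Real.log 2) →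
      (1 - β * ν) * ψ z + ν * Real.log d ≤ logCoeff ψ * -Real.log ‖z‖ + K := by
  obtain ⟨L, hL, hlog⟩ := exists_setIntegral_ball_abs_log_norm_le (E := Plane) (μ := volume)
    finrank_euclideanSpace_fin.ge
  obtain ⟨K, hK⟩ := h.exists_abs_sub_setIntegral_ball_le hδ
  have hmass := integral_bubble_pos
  refine ⟨(K + 2 * C * L) / (∫ x, bubble x) + ν * Real.log 2, fun z d hz hzδ hd hd_le hmax => ?_⟩
  have hnear := h.setIntegral_ball_le_of_near_max hC hβ hexp hδr hν hL hlog hz hd hd_le hmax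
  have hdiv : ψ z + logCoeff ψ * Real.log ‖z‖ - ν * (Real.log 2 - Real.log d + β * ψ z) ≤
      (K + 2 * C * L) / ∫ x, bubble x := by
    rw [le_div_iff₀ hmass]
    linarith [(abs_le.1 (hK z hz hzδ)).2]
  linarith

theorem exists_near_max (h : IsPuncturedSuperharmonic ψ r) {ν : ℝ} (hβ : 0 ≤ β) (hν : 0 < ν)
    (hβν : β * ν ≤ 1 / 2) {z : Plane} (hz : z ≠ 0) :
    ∃ y d, 0 < d ∧ d ≤ ‖z‖ / 2 ∧ dist y z < ‖z‖ / 2 ∧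
      (1 - β * ν) * ψ z + ν * Real.log (‖z‖ / 2) ≤ (1 - β * ν) * ψ y + ν * Real.log d ∧
      ∀ w ∈ ball y (d / 2), β * ψ w ≤ β * ψ y + Real.log 2 := by
  have hz_norm : 0 < ‖z‖ := norm_pos_iff.2 hz
  have hcont : ContinuousOn (fun w => (1 - β * ν) / ν * ψ w) (closedBall z (‖z‖ / 2)) := by
    refine ContinuousOn.mul continuousOn_const fun w hw => ?_
    have hw_ne : w ≠ 0 := by
      rintro rfl
      rw [mem_closedBall, dist_zero_left] at hw
      linarith
    exact (h.smooth w hw_ne).continuousAt.continuousWithinAt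
  obtain ⟨y, hy, hcenter, hnear⟩ := exists_weighted_max (half_pos hz_norm) hcont
  have hscale (t : ℝ) : ν * ((1 - β * ν) / ν * t) = (1 - β * ν) * t := by field_simp
  refine ⟨y, ‖z‖ / 2 - dist y z, sub_pos.2 hy, sub_le_self _ dist_nonneg, hy, ?_, fun w hw => ?_⟩
  · have hmul := mul_le_mul_of_nonneg_left hcenter hν.le
    rwa [mul_add, mul_add, hscale, hscale] at hmul
  · have hmul := mul_le_mul_of_nonneg_left (hnear w hw) hν.le
    rw [mul_add, hscale, hscale] at hmul
    have hscaled : (1 - β * ν) * (β * ψ w - β * ψ y) ≤ (1 - β * ν) * Real.log 2 := by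
      have hlog_two := Real.log_pos one_lt_two
      nlinarith
    linarith [le_of_mul_le_mul_left hscaled (by linarith)]

theorem upper_growth (h : IsPuncturedSuperharmonic ψ r) (hC : 0 ≤ C) (hβ : 0 ≤ β)
    (hexp : ∀ z, z ≠ 0 → ‖z‖ < r → -lap ψ z ≤ C * Real.exp (β * ψ z)) {ν : ℝ} (hν : 0 < ν)
    (hβν : β * ν ≤ 1 / 2) :
    ∃ K, ∀ᶠ z in 𝓝[≠] 0, (1 - β * ν) * ψ z ≤ (logCoeff ψ + ν) * -Real.log ‖z‖ + K := by
  have hmass : 0 < (∫ x, bubble x) * ν := mul_pos integral_bubble_pos hν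
  obtain ⟨δ, ⟨hδ_int, hδ⟩, hδr⟩ := ((((tendsto_setIntegral_ball_zero h.integrable_lap.neg
    (0 : Plane)).eventually (gt_mem_nhds hmass)).and self_mem_nhdsWithin).and
    (nhdsWithin_le_nhds (Iic_mem_nhds h.pos))).exists
  obtain ⟨K, hK⟩ := h.exists_near_max_bound hC hβ hexp hδ hδr hδ_int.le
  refine ⟨K + |logCoeff ψ| * Real.log 2 + ν * Real.log 2, ?_⟩
  have hδ_small : 0 < min (δ / 3) 1 := lt_min (div_pos hδ zero_lt_three) one_pos
  filter_upwards [eventually_nhdsNE_zero hδ_small] with z ⟨hz, hz_small⟩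
  obtain ⟨hzδ, hz_one⟩ := lt_min_iff.1 hz_small
  have hz_norm : 0 < ‖z‖ := norm_pos_iff.2 hz
  obtain ⟨y, d, hd, hdz, hyz, hcenter, hnear⟩ := h.exists_near_max hβ hν hβν hz
  rw [dist_eq_norm] at hyz
  have hy_lower : ‖z‖ / 2 < ‖y‖ := by linarith [norm_sub_norm_le z y, norm_sub_rev z y]
  have hy_upper : ‖y‖ < 3 / 2 * ‖z‖ := by linarith [norm_sub_norm_le y z]
  have hy : y ≠ 0 := norm_pos_iff.1 (by linarith)
  have hpeak := hK y d hy (by linarith) hd (by linarith) hnear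
  have hlog : logCoeff ψ * -Real.log ‖y‖ ≤
      logCoeff ψ * -Real.log ‖z‖ + |logCoeff ψ| * Real.log 2 := by
    have hmul := mul_le_mul_of_nonneg_left
      (abs_log_sub_log_le hz_norm hy_lower.le (by linarith)) (abs_nonneg (logCoeff ψ))
    rw [← abs_mul] at hmul
    linarith [neg_abs_le (logCoeff ψ * (Real.log ‖y‖ - Real.log ‖z‖))]
  rw [Real.log_div hz_norm.ne' two_ne_zero] at hcenter
  linarith

theorem tendsto_div_log (h : IsPuncturedSuperharmonic ψ r) (hC : 0 ≤ C) (hβ : 0 ≤ β)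
    (hexp : ∀ z, z ≠ 0 → ‖z‖ < r → -lap ψ z ≤ C * Real.exp (β * ψ z)) :
    Tendsto (fun z => ψ z / -Real.log ‖z‖) (𝓝[≠] 0) (𝓝 (logCoeff ψ)) := by
  have hlog : Tendsto (fun z : Plane => -Real.log ‖z‖) (𝓝[≠] 0) atTop := tendsto_neg_log_norm
  refine tendsto_order.2 ⟨fun a ha => ?_, fun a ha => ?_⟩
  · obtain ⟨K, hlower⟩ := h.lower_growth
    filter_upwards [hlower, hlog.eventually_gt_atTop 0,
      hlog.eventually_gt_atTop (K / (logCoeff ψ - a))] with z hz hz_pos hz_large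
    rw [lt_div_iff₀ hz_pos]
    rw [div_lt_iff₀ (sub_pos.2 ha)] at hz_large
    linarith
  · have hslope : ContinuousAt (fun ν => (1 - β * ν) * a - (logCoeff ψ + ν)) 0 := by fun_prop
    have hfactor : ContinuousAt (fun ν => β * ν) 0 := by fun_prop
    have hgap_near : ∀ᶠ ν in 𝓝 0, 0 < (1 - β * ν) * a - (logCoeff ψ + ν) :=
      hslope.eventually (lt_mem_nhds (by simpa using ha))
    have hβν_near : ∀ᶠ ν in 𝓝 0, β * ν < 1 / 2 :=
      hfactor.eventually (gt_mem_nhds (by simp))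
    obtain ⟨ν, ⟨hgap, hβν⟩, hν⟩ := (((hgap_near.and hβν_near).filter_mono
      nhdsWithin_le_nhds).and (self_mem_nhdsWithin (a := (0 : ℝ)) (s := Set.Ioi 0))).exists
    obtain ⟨K, hupper⟩ := h.upper_growth hC hβ hexp hν hβν.le
    filter_upwards [hupper, hlog.eventually_gt_atTop 0,
      hlog.eventually_gt_atTop (K / ((1 - β * ν) * a - (logCoeff ψ + ν)))] with z hz hz_pos hz_large
    rw [div_lt_iff₀ hz_pos]
    rw [div_lt_iff₀ hgap] at hz_large
    refine lt_of_mul_lt_mul_left (a := 1 - β * ν) ?_ (by linarith)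
    linarith

end IsPuncturedSuperharmonic

/-! ### Differentiability of logarithmic potentials -/

/-- The derivative of `regLog ε`; for `ε = 0` it is that of the kernel `log ‖x‖` away from the
origin, with the junk value `0` at the origin. -/
noncomputable def gradLog {E : Type*} [NormedAddCommGroup E] [InnerProductSpace ℝ E] (ε : ℝ)
    (x : E) : E →L[ℝ] ℝ :=
  (‖x‖ ^ 2 + ε)⁻¹ • innerSL ℝ x

/-- The Riesz potential of order `s` of the density `|F|` is finite everywhere and at most `B`. -/
def RieszBounded {E : Type*} [NormedAddCommGroup E] [MeasurableSpace E] (μ : Measure E)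
    (F : E → ℝ) (s B : ℝ) : Prop :=
  ∀ z, Integrable (fun w => |F w| * ‖z - w‖ ^ (-s)) μ ∧ ∫ w, |F w| * ‖z - w‖ ^ (-s) ∂μ ≤ B

section GradLog

variable {E : Type*} [NormedAddCommGroup E] [InnerProductSpace ℝ E] {ε θ : ℝ} {x : E}

theorem hasFDerivAt_regLog (hε : 0 < ε) (x : E) : HasFDerivAt (regLog ε) (gradLog ε x) x := by
  have hpos : 0 < ‖x‖ ^ 2 + ε := by positivity
  convert! (((hasStrictFDerivAt_norm_sq x).hasFDerivAt.add_const ε).log hpos.ne').mul_const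
    (2⁻¹ : ℝ) using 1
  ext y
  simp only [gradLog, smul_apply, coe_innerSL_apply, smul_eq_mul, nsmul_eq_mul, Nat.cast_ofNat]
  ring

theorem norm_gradLog (hε : 0 ≤ ε) (x : E) : ‖gradLog ε x‖ = (‖x‖ ^ 2 + ε)⁻¹ * ‖x‖ := by
  rw [gradLog, norm_smul, innerSL_apply_norm, Real.norm_of_nonneg (by positivity)]

theorem norm_gradLog_le (hε : 0 < ε) (x : E) : ‖gradLog ε x‖ ≤ (√ε)⁻¹ := by
  have hroot : 0 < √ε := Real.sqrt_pos.2 hε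
  rw [norm_gradLog hε.le, inv_mul_le_iff₀ (by positivity), ← div_eq_mul_inv, le_div_iff₀ hroot]
  nlinarith [sq_nonneg (‖x‖ - √ε), Real.sq_sqrt hε.le, sq_nonneg ‖x‖]

theorem norm_gradLog_sub_le (hε : 0 < ε) (hθ : 0 ≤ θ) (hθ_one : θ ≤ 1) (hx : x ≠ 0) :
    ‖gradLog ε x - gradLog 0 x‖ ≤ ε ^ θ * ‖x‖ ^ (-(1 + 2 * θ)) := by
  have hnorm : 0 < ‖x‖ := norm_pos_iff.2 hx
  have hyoung : ε ^ (1 - θ) * (‖x‖ ^ 2) ^ θ ≤ ‖x‖ ^ 2 + ε := by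
    refine (Real.geom_mean_le_arith_mean2_weighted (sub_nonneg.2 hθ_one) hθ hε.le (sq_nonneg ‖x‖)
      (by ring)).trans ?_
    nlinarith [sq_nonneg ‖x‖]
  have hdiff : (‖x‖ ^ 2 + ε)⁻¹ - (‖x‖ ^ 2 + 0)⁻¹ = -(ε / (‖x‖ ^ 2 * (‖x‖ ^ 2 + ε))) := by
    field_simp
    ring
  have hsmul : gradLog ε x - gradLog 0 x =
      ((‖x‖ ^ 2 + ε)⁻¹ - (‖x‖ ^ 2 + 0)⁻¹) • innerSL ℝ x := (sub_smul _ _ _).symm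
  rw [hsmul, hdiff, norm_smul, innerSL_apply_norm, norm_neg,
    Real.norm_of_nonneg (by positivity)]
  calc ε / (‖x‖ ^ 2 * (‖x‖ ^ 2 + ε)) * ‖x‖ = ε / (‖x‖ * (‖x‖ ^ 2 + ε)) := by field_simp
    _ ≤ ε / (‖x‖ * (ε ^ (1 - θ) * (‖x‖ ^ 2) ^ θ)) := by gcongr
    _ = ε ^ θ * ‖x‖ ^ (-(1 + 2 * θ)) := by
        rw [Real.rpow_sub hε, Real.rpow_one, Real.rpow_neg hnorm.le, Real.rpow_add hnorm,
          Real.rpow_one, Real.rpow_mul hnorm.le, Real.rpow_two]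
        field_simp

theorem continuous_gradLog (hε : 0 < ε) : Continuous (gradLog ε : E → E →L[ℝ] ℝ) :=
  ((by fun_prop : Continuous fun x : E => ‖x‖ ^ 2 + ε).inv₀ fun x => by positivity).smul
    (innerSL ℝ).continuous

theorem norm_smul_gradLog_le (hε : 0 < ε) (F : E → ℝ) (z w : E) :
    ‖F w • gradLog ε (z - w)‖ ≤ |F w| * (√ε)⁻¹ := by
  rw [norm_smul, Real.norm_eq_abs]
  exact mul_le_mul_of_nonneg_left (norm_gradLog_le hε _) (abs_nonneg _)

variable [MeasurableSpace E] [BorelSpace E] [SecondCountableTopology E] {μ : Measure E}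
  {F : E → ℝ}

theorem stronglyMeasurable_gradLog (ε : ℝ) : StronglyMeasurable (gradLog ε : E → E →L[ℝ] ℝ) :=
  (by fun_prop : Measurable fun x : E => (‖x‖ ^ 2 + ε)⁻¹).stronglyMeasurable.smul
    ((innerSL ℝ).continuous.comp_stronglyMeasurable stronglyMeasurable_id)

theorem aestronglyMeasurable_smul_gradLog (hF : AEStronglyMeasurable F μ) (ε : ℝ) (z : E) :
    AEStronglyMeasurable (fun w => F w • gradLog ε (z - w)) μ :=
  hF.smul ((stronglyMeasurable_gradLog ε).comp_measurable (by fun_prop)).aestronglyMeasurable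

theorem integrable_smul_gradLog (hF : Integrable F μ) (hε : 0 < ε) (z : E) :
    Integrable (fun w => F w • gradLog ε (z - w)) μ :=
  (hF.abs.mul_const _).mono' (aestronglyMeasurable_smul_gradLog hF.aestronglyMeasurable ε z)
    (Eventually.of_forall (norm_smul_gradLog_le hε F z))

theorem continuous_integral_smul_gradLog (hF : Integrable F μ) (hε : 0 < ε) :
    Continuous fun z => ∫ w, F w • gradLog ε (z - w) ∂μ :=
  continuous_of_dominated
    (fun z => aestronglyMeasurable_smul_gradLog hF.aestronglyMeasurable ε z)
    (fun z => Eventually.of_forall (norm_smul_gradLog_le hε F z)) (hF.abs.mul_const _)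
    (Eventually.of_forall fun w =>
      ((continuous_gradLog hε).comp (by fun_prop)).const_smul (F w))

theorem hasFDerivAt_integral_mul_regLog (hF : Integrable F μ) (hε : 0 < ε) (z : E)
    (hz : Integrable (fun w => F w * regLog ε (z - w)) μ) :
    HasFDerivAt (fun z => ∫ w, F w * regLog ε (z - w) ∂μ)
      (∫ w, F w • gradLog ε (z - w) ∂μ) z :=
  hasFDerivAt_integral_of_dominated_of_fderiv_le (s := Set.univ)
    (F := fun z w => F w * regLog ε (z - w)) (F' := fun z w => F w • gradLog ε (z - w))
    univ_mem (Eventually.of_forall fun z =>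
      aestronglyMeasurable_mul_regLog hF.aestronglyMeasurable hε z) hz
    (integrable_smul_gradLog hF hε z).aestronglyMeasurable
    (Eventually.of_forall fun w x _ => norm_smul_gradLog_le hε F x w) (hF.abs.mul_const _)
    (Eventually.of_forall fun w x _ => by
      simpa using! ((hasFDerivAt_regLog hε (x - w)).comp x
        ((hasFDerivAt_id x).sub_const w)).const_mul (F w))

end GradLog

namespace RieszBounded

section

variable {E : Type*} [NormedAddCommGroup E] [MeasurableSpace E] [BorelSpace E] {μ : Measure E}
  {F : E → ℝ} {s B ρ : ℝ}

theorem integrable_mul_log (h : RieszBounded μ F s B) (hs : 0 < s) (hF : Integrable F μ)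
    (hF_supp : ∀ w, ρ < ‖w‖ → F w = 0) (z : E) :
    Integrable (fun w => F w * Real.log ‖z - w‖) μ := by
  refine (((h z).1.const_mul s⁻¹).add (hF.abs.mul_const (‖z‖ + ρ))).mono'
    (aestronglyMeasurable_mul_log_norm_sub hF.aestronglyMeasurable z)
    (Eventually.of_forall fun w => ?_)
  rcases lt_or_ge ρ ‖w‖ with hw_far | hw_near
  · simp [hF_supp w hw_far]
  have hdist : ‖z - w‖ ≤ ‖z‖ + ρ := (norm_sub_le z w).trans (by gcongr)
  have hlog : |Real.log ‖z - w‖| ≤ s⁻¹ * ‖z - w‖ ^ (-s) + (‖z‖ + ρ) := by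
    rcases le_total ‖z - w‖ 1 with hle | hge
    · linarith [abs_log_le_inv_mul_rpow_neg (norm_nonneg (z - w)) hle hs, norm_nonneg (z - w)]
    · have hfar := abs_log_le_abs_log_add one_pos hge hdist
      rw [Real.log_one, abs_zero, zero_add] at hfar
      exact hfar.trans (le_add_of_nonneg_left (by positivity))
  rw [Real.norm_eq_abs, abs_mul]
  calc |F w| * |Real.log ‖z - w‖| ≤ |F w| * (s⁻¹ * ‖z - w‖ ^ (-s) + (‖z‖ + ρ)) :=
        mul_le_mul_of_nonneg_left hlog (abs_nonneg _)
    _ = s⁻¹ * (|F w| * ‖z - w‖ ^ (-s)) + |F w| * (‖z‖ + ρ) := by ring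

end

section

variable {E : Type*} [NormedAddCommGroup E] [InnerProductSpace ℝ E] [MeasurableSpace E]
  [BorelSpace E] [SecondCountableTopology E] {μ : Measure E} [NullSingletonClass μ]
  {F : E → ℝ} {B ρ θ : ℝ}

theorem norm_integral_smul_gradLog_sub_le (h : RieszBounded μ F (1 + 2 * θ) B) (hθ : 0 ≤ θ)
    (hθ_one : θ ≤ 1) (hF : Integrable F μ) {ε : ℝ} (hε : 0 < ε) (z : E) :
    ‖(∫ w, F w • gradLog 0 (z - w) ∂μ) - ∫ w, F w • gradLog ε (z - w) ∂μ‖ ≤ ε ^ θ * B := by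
  have hbound : ∀ᵐ w ∂μ, ‖F w • gradLog ε (z - w) - F w • gradLog 0 (z - w)‖ ≤
      ε ^ θ * (|F w| * ‖z - w‖ ^ (-(1 + 2 * θ))) := by
    filter_upwards [μ.ae_ne z] with w hw
    have hsmul : F w • gradLog ε (z - w) - F w • gradLog 0 (z - w) =
        F w • (gradLog ε (z - w) - gradLog 0 (z - w)) := (smul_sub _ _ _).symm
    rw [hsmul, norm_smul, Real.norm_eq_abs, mul_left_comm]
    exact mul_le_mul_of_nonneg_left
      (norm_gradLog_sub_le hε hθ hθ_one (sub_ne_zero.2 hw.symm)) (abs_nonneg _)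
  have hint := (h z).1.const_mul (ε ^ θ)
  have hreg := integrable_smul_gradLog hF hε z
  have hdiff := hint.mono' (hreg.aestronglyMeasurable.sub
    (aestronglyMeasurable_smul_gradLog hF.aestronglyMeasurable 0 z)) hbound
  have hzero : Integrable (fun w => F w • gradLog 0 (z - w)) μ :=
    (hreg.sub hdiff).congr (Eventually.of_forall fun w => sub_sub_cancel _ _)
  rw [norm_sub_rev, ← integral_sub hreg hzero]
  refine (norm_integral_le_of_norm_le hint hbound).trans ?_
  rw [integral_const_mul]
  exact mul_le_mul_of_nonneg_left (h z).2 (by positivity)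

theorem tendstoUniformly_integral_smul_gradLog (h : RieszBounded μ F (1 + 2 * θ) B) (hθ : 0 < θ)
    (hθ_one : θ ≤ 1) (hF : Integrable F μ) :
    TendstoUniformly (fun ε z => ∫ w, F w • gradLog ε (z - w) ∂μ)
      (fun z => ∫ w, F w • gradLog 0 (z - w) ∂μ) (𝓝[>] 0) := by
  have hlim : Tendsto (fun ε : ℝ => ε ^ θ * B) (𝓝[>] 0) (𝓝 0) := by
    have hpow : Tendsto (fun ε : ℝ => ε ^ θ) (𝓝[>] 0) (𝓝 (0 ^ θ)) :=
      (Real.continuousAt_rpow_const 0 θ (Or.inr hθ.le)).tendsto.mono_left nhdsWithin_le_nhds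
    simpa [Real.zero_rpow hθ.ne'] using hpow.mul_const B
  refine Metric.tendstoUniformly_iff.2 fun η hη => ?_
  filter_upwards [hlim.eventually (gt_mem_nhds hη), self_mem_nhdsWithin] with ε hε_small hε z
  rw [dist_eq_norm]
  exact (h.norm_integral_smul_gradLog_sub_le hθ.le hθ_one hF hε z).trans_lt hε_small

theorem contDiff_logPotential (h : RieszBounded μ F (1 + 2 * θ) B) (hθ : 0 < θ) (hθ_one : θ ≤ 1)
    (hF : Integrable F μ) (hF_supp : ∀ w, ρ < ‖w‖ → F w = 0) :
    ContDiff ℝ 1 (logPotential μ F) := by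
  have hlog := h.integrable_mul_log (by positivity) hF hF_supp
  have hunif := h.tendstoUniformly_integral_smul_gradLog hθ hθ_one hF
  refine contDiff_one_iff_hasFDerivAt.2
    ⟨fun z => ∫ w, F w • gradLog 0 (z - w) ∂μ, ?_, fun z => ?_⟩
  · refine hunif.continuous (Eventually.frequently ?_)
    filter_upwards [self_mem_nhdsWithin] with ε hε using continuous_integral_smul_gradLog hF hε
  · refine hasFDerivAt_of_tendstoUniformlyOnFilter (l := 𝓝[>] (0 : ℝ))
      (hunif.tendstoUniformlyOnFilter.mono_right le_top) ?_
      (Eventually.of_forall fun x => tendsto_integral_mul_regLog hF hF_supp (hlog x))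
    filter_upwards [tendsto_fst.eventually eventually_pos_and_le_one] with ⟨ε, x⟩ hε
      using hasFDerivAt_integral_mul_regLog hF hε.1 x
        (integrable_mul_regLog hF hF_supp (hlog x) hε.1 hε.2)

end

end RieszBounded

section RieszBound

theorem rpow_mul_rpow_le_add {x y p q : ℝ} (hx : 0 < x) (hy : 0 < y) (hp : p ≤ 0) (hq : q ≤ 0) :
    x ^ p * y ^ q ≤ x ^ (p + q) + y ^ (p + q) := by
  rcases le_total x y with hxy | hyx
  · calc x ^ p * y ^ q ≤ x ^ p * x ^ q :=
          mul_le_mul_of_nonneg_left (Real.rpow_le_rpow_of_nonpos hx hxy hq) (by positivity)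
      _ = x ^ (p + q) := (Real.rpow_add hx p q).symm
      _ ≤ _ := le_add_of_nonneg_right (by positivity)
  · calc x ^ p * y ^ q ≤ y ^ p * y ^ q :=
          mul_le_mul_of_nonneg_right (Real.rpow_le_rpow_of_nonpos hy hyx hp) (by positivity)
      _ = y ^ (p + q) := (Real.rpow_add hy p q).symm
      _ ≤ _ := le_add_of_nonneg_left (by positivity)

variable {E : Type*} [NormedAddCommGroup E] [NormedSpace ℝ E] [FiniteDimensional ℝ E]
  [Nontrivial E] [MeasurableSpace E] [BorelSpace E] {μ : Measure E} [μ.IsAddHaarMeasure]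

theorem exists_setIntegral_norm_sub_rpow_neg_le {α : ℝ} (hα : 0 ≤ α)
    (hα_lt : α < Module.finrank ℝ E) (r : ℝ) :
    ∃ B, ∀ z : E, IntegrableOn (fun w => ‖z - w‖ ^ (-α)) (ball 0 r) μ ∧
      ∫ w in ball 0 r, ‖z - w‖ ^ (-α) ∂μ ≤ B := by
  refine ⟨(∫ x in ball (0 : E) 1, ‖x‖ ^ (-α) ∂μ) + ∫ _ in ball (0 : E) r, (1 : ℝ) ∂μ,
    fun z => ?_⟩
  have hone : IntegrableOn (fun _ : E => (1 : ℝ)) (ball 0 r) μ :=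
    integrableOn_const measure_ball_lt_top.ne
  have hnear : Integrable ((ball z 1).indicator fun w => ‖z - w‖ ^ (-α)) μ :=
    (integrable_indicator_iff measurableSet_ball).2 ((integrableOn_ball_comp_sub_left z).2
      (integrableOn_ball_norm_rpow_neg hα_lt 1))
  have hnear_nonneg : 0 ≤ (ball z 1).indicator fun w => ‖z - w‖ ^ (-α) :=
    fun w => Set.indicator_nonneg (fun _ _ => by positivity) w
  have hle : ∀ w, ‖z - w‖ ^ (-α) ≤ (ball z 1).indicator (fun w => ‖z - w‖ ^ (-α)) w + 1 :=
    fun w => by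
      by_cases hw : w ∈ ball z 1
      · rw [Set.indicator_of_mem hw]
        exact le_add_of_nonneg_right zero_le_one
      · rw [Set.indicator_of_notMem hw, zero_add]
        refine Real.rpow_le_one_of_one_le_of_nonpos ?_ (neg_nonpos.2 hα)
        rwa [mem_ball', not_lt, dist_eq_norm] at hw
  have hsum := hnear.integrableOn.add hone
  have hint : IntegrableOn (fun w => ‖z - w‖ ^ (-α)) (ball 0 r) μ :=
    hsum.mono' (Measurable.aestronglyMeasurable (by fun_prop)) (Eventually.of_forall fun w => by
      rw [Real.norm_of_nonneg (by positivity)]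
      exact hle w)
  refine ⟨hint, (integral_mono hint hsum hle).trans ?_⟩
  have htransl : ∫ w, (ball z 1).indicator (fun w => ‖z - w‖ ^ (-α)) w ∂μ =
      ∫ x in ball (0 : E) 1, ‖x‖ ^ (-α) ∂μ := by
    rw [integral_indicator measurableSet_ball]
    exact setIntegral_ball_comp_sub_left (fun x => ‖x‖ ^ (-α)) z 1
  rw [integral_add' hnear.integrableOn hone, ← htransl]
  exact add_le_add (setIntegral_le_integral hnear (Eventually.of_forall hnear_nonneg)) le_rfl

theorem ae_abs_mul_rpow_neg_le {F : E → ℝ} {A a s : ℝ}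
    (hF_le : ∀ w, w ≠ 0 → |F w| ≤ A * ‖w‖ ^ (-a)) (hA : 0 ≤ A) (ha : 0 ≤ a) (hs : 0 ≤ s) (z : E) :
    ∀ᵐ w ∂μ, |F w| * ‖z - w‖ ^ (-s) ≤
      A * (‖0 - w‖ ^ (-(a + s)) + ‖z - w‖ ^ (-(a + s))) := by
  filter_upwards [μ.ae_ne 0, μ.ae_ne z] with w hw hwz
  rw [zero_sub, norm_neg, neg_add]
  calc |F w| * ‖z - w‖ ^ (-s) ≤ A * ‖w‖ ^ (-a) * ‖z - w‖ ^ (-s) :=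
        mul_le_mul_of_nonneg_right (hF_le w hw) (by positivity)
    _ ≤ A * (‖w‖ ^ (-a + -s) + ‖z - w‖ ^ (-a + -s)) := by
        rw [mul_assoc]
        exact mul_le_mul_of_nonneg_left (rpow_mul_rpow_le_add (norm_pos_iff.2 hw)
          (norm_pos_iff.2 (sub_ne_zero.2 hwz.symm)) (neg_nonpos.2 ha) (neg_nonpos.2 hs)) hA

theorem exists_rieszBounded {F : E → ℝ} {A a s ρ : ℝ} (hF : AEStronglyMeasurable F μ)
    (hF_supp : ∀ w, ρ < ‖w‖ → F w = 0) (hF_le : ∀ w, w ≠ 0 → |F w| ≤ A * ‖w‖ ^ (-a))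
    (ha : 0 ≤ a) (hs : 0 ≤ s) (has : a + s < Module.finrank ℝ E) :
    ∃ B, RieszBounded μ F s B := by
  obtain ⟨B, hB⟩ := exists_setIntegral_norm_sub_rpow_neg_le (μ := μ) (add_nonneg ha hs) has (ρ + 1)
  have hA : 0 ≤ A := by
    obtain ⟨w, hw⟩ := exists_ne (0 : E)
    have : 0 < ‖w‖ := norm_pos_iff.2 hw
    exact nonneg_of_mul_nonneg_left ((abs_nonneg _).trans (hF_le w hw)) (by positivity)
  refine ⟨A * (B + B), fun z => ?_⟩
  set S := ball (0 : E) (ρ + 1)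
  have hdom : IntegrableOn (fun w => A * (‖0 - w‖ ^ (-(a + s)) + ‖z - w‖ ^ (-(a + s)))) S μ :=
    ((hB 0).1.add (hB z).1).const_mul A
  have hle := ae_abs_mul_rpow_neg_le (μ := μ) hF_le hA ha hs z
  have hzero : ∀ w ∉ S, |F w| * ‖z - w‖ ^ (-s) = 0 := fun w hw => by
    have hw_far : ρ + 1 ≤ ‖w‖ := by simpa [S] using hw
    rw [hF_supp w (by linarith), abs_zero, zero_mul]
  have hint : IntegrableOn (fun w => |F w| * ‖z - w‖ ^ (-s)) S μ := by
    refine hdom.mono' (hF.norm.mul (Measurable.aestronglyMeasurable (by fun_prop))).restrict ?_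
    filter_upwards [ae_restrict_of_ae hle] with w hw
    rwa [Real.norm_of_nonneg (by positivity)]
  refine ⟨(integrableOn_iff_integrable_of_support_subset
    (Function.support_subset_iff'.2 hzero)).1 hint, ?_⟩
  rw [← setIntegral_eq_integral_of_forall_compl_eq_zero hzero]
  refine (integral_mono_ae hint hdom (ae_restrict_of_ae hle)).trans ?_
  rw [integral_const_mul, integral_add (hB 0).1 (hB z).1]
  exact mul_le_mul_of_nonneg_left (add_le_add (hB 0).2 (hB z).2) hA

end RieszBound

namespace IsPuncturedSuperharmonic

variable {ψ : Plane → ℝ} {r C β : ℝ}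

theorem exists_exp_mul_le_rpow (h : IsPuncturedSuperharmonic ψ r) (hC : 0 ≤ C) (hβ : 0 ≤ β)
    (hexp : ∀ z, z ≠ 0 → ‖z‖ < r → -lap ψ z ≤ C * Real.exp (β * ψ z)) (h0 : logCoeff ψ = 0) :
    ∃ K, ∀ᶠ z in 𝓝[≠] 0, Real.exp (β * ψ z) ≤ Real.exp K * ‖z‖ ^ (-(1 / 4) : ℝ) := by
  have hβν : β * (1 / (5 * (β + 1))) ≤ 1 / 5 := by
    rw [mul_one_div, div_le_div_iff₀ (by positivity) (by norm_num)]
    linarith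
  obtain ⟨K, hK⟩ := h.upper_growth hC hβ hexp (ν := 1 / (5 * (β + 1))) (by positivity)
    (by linarith)
  refine ⟨5 / 4 * (β * K), ?_⟩
  filter_upwards [hK, eventually_nhdsNE_zero one_pos] with z hz ⟨hz_ne, hz_lt⟩
  have hz_norm : 0 < ‖z‖ := norm_pos_iff.2 hz_ne
  have hlog : 0 ≤ -Real.log ‖z‖ := neg_nonneg.2 (Real.log_nonpos hz_norm.le hz_lt.le)
  rw [Real.rpow_def_of_pos hz_norm, ← Real.exp_add]
  refine Real.exp_le_exp.2 ?_
  rw [h0, zero_add] at hz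
  have hscaled := mul_le_mul_of_nonneg_left hz hβ
  have hψ := mul_le_mul_of_nonneg_right hβν (mul_nonneg hβ (h.nonneg z hz_ne))
  have hν := mul_le_mul_of_nonneg_right hβν hlog
  linarith

theorem exists_abs_lap_le_rpow (h : IsPuncturedSuperharmonic ψ r) (hC : 0 ≤ C) (hβ : 0 ≤ β)
    (hexp : ∀ z, z ≠ 0 → ‖z‖ < r → -lap ψ z ≤ C * Real.exp (β * ψ z)) (h0 : logCoeff ψ = 0) :
    ∃ A, ∀ z, z ≠ 0 → |lap ψ z| ≤ A * ‖z‖ ^ (-(1 / 4) : ℝ) := by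
  obtain ⟨K, hK⟩ := h.exists_exp_mul_le_rpow hC hβ hexp h0
  obtain ⟨δ, hδ, hnear⟩ := Metric.eventually_nhds_iff_ball.1
    (eventually_nhdsWithin_iff.1 (hK.and (eventually_nhdsNE_zero h.pos)))
  obtain ⟨B, hB⟩ := ((isCompact_closedBall (0 : Plane) 1).diff
    (isOpen_ball (x := 0) (ε := δ))).exists_bound_of_continuousOn (f := lap ψ) fun z hz =>
      (h.continuousAt_lap_of_ne fun hz0 => hz.2 (hz0 ▸ mem_ball_self hδ)).continuousWithinAt
  have hA : 0 ≤ max B (C * Real.exp K) := le_max_of_le_right (by positivity)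
  refine ⟨max B (C * Real.exp K), fun z hz => ?_⟩
  have hz_norm : 0 < ‖z‖ := norm_pos_iff.2 hz
  by_cases hzδ : z ∈ ball 0 δ
  · obtain ⟨hz_exp, -, hzr⟩ := hnear z hzδ hz
    rw [abs_of_nonpos (h.superharmonic z hz hzr)]
    calc -lap ψ z ≤ C * Real.exp (β * ψ z) := hexp z hz hzr
      _ ≤ C * (Real.exp K * ‖z‖ ^ (-(1 / 4) : ℝ)) := by gcongr
      _ ≤ _ := by
          rw [← mul_assoc]
          gcongr
          exact le_max_right _ _
  · rcases lt_or_ge 1 ‖z‖ with hz_far | hz_one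
    · rw [h.lap_eq_zero (by linarith), abs_zero]
      positivity
    · calc |lap ψ z| ≤ max B (C * Real.exp K) :=
            (hB z ⟨mem_closedBall_zero_iff.2 hz_one, hzδ⟩).trans (le_max_left _ _)
        _ ≤ _ := le_mul_of_one_le_right hA
            (Real.one_le_rpow_of_pos_of_le_one_of_nonpos hz_norm hz_one (by norm_num))

theorem exists_contDiff_extension (h : IsPuncturedSuperharmonic ψ r) (hC : 0 ≤ C) (hβ : 0 ≤ β)
    (hexp : ∀ z, z ≠ 0 → ‖z‖ < r → -lap ψ z ≤ C * Real.exp (β * ψ z)) (h0 : logCoeff ψ = 0) :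
    ∃ g : Plane → ℝ, ContDiff ℝ 1 g ∧ ∀ z, z ≠ 0 → ψ z = g z := by
  obtain ⟨A, hA⟩ := h.exists_abs_lap_le_rpow hC hβ hexp h0
  obtain ⟨B, hB⟩ := exists_rieszBounded (s := 1 + 2 * (1 / 4))
    h.integrable_lap.aestronglyMeasurable (fun _ => h.lap_eq_zero) hA (by norm_num) (by norm_num)
    (by rw [finrank_euclideanSpace_fin]; norm_num)
  have hmass := integral_bubble_pos.ne'
  have htotal : ∫ w, lap ψ w = 0 := (div_eq_zero_iff.1 h0).resolve_right hmass
  refine ⟨_, (hB.contDiff_logPotential (by norm_num) (by norm_num) h.integrable_lap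
    fun _ => h.lap_eq_zero).div_const (∫ x, bubble x), fun z hz => ?_⟩
  rw [eq_div_iff hmass, mul_comm, h.integral_bubble_mul_eq hz, htotal, zero_mul, sub_zero]

theorem logCoeff_nonneg (h : IsPuncturedSuperharmonic ψ r) (hC : 0 ≤ C) (hβ : 0 ≤ β)
    (hexp : ∀ z, z ≠ 0 → ‖z‖ < r → -lap ψ z ≤ C * Real.exp (β * ψ z)) : 0 ≤ logCoeff ψ := by
  refine ge_of_tendsto (h.tendsto_div_log hC hβ hexp) ?_
  filter_upwards [self_mem_nhdsWithin, tendsto_neg_log_norm.eventually_ge_atTop 0] with z hz hlog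
    using div_nonneg (h.nonneg z hz) hlog

end IsPuncturedSuperharmonic

/-! ### The dichotomy -/

section Cutoff

variable {v : Plane → ℝ} {R : ℝ}

theorem isOpen_punctured_ball (R : ℝ) : IsOpen {z : Plane | 0 < ‖z‖ ∧ ‖z‖ < R} :=
  (isOpen_lt continuous_const continuous_norm).inter (isOpen_lt continuous_norm continuous_const)

theorem exists_isPuncturedSuperharmonic (hR : 0 < R)
    (hv : ContDiffOn ℝ 2 v {z | 0 < ‖z‖ ∧ ‖z‖ < R})
    (hv_nonneg : ∀ z, 0 < ‖z‖ → ‖z‖ < R → 0 ≤ v z)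
    (hv_lap : ∀ z, 0 < ‖z‖ → ‖z‖ < R → 0 ≤ -lap v z) :
    ∃ ψ r, IsPuncturedSuperharmonic ψ r ∧ r ≤ R ∧ Set.EqOn ψ v (ball 0 r) := by
  set ρ := min R 1
  have hρ : 0 < ρ := lt_min hR one_pos
  have hρR : ρ ≤ R := min_le_left _ _
  have hρ_one : ρ ≤ 1 := min_le_right _ _
  let χ : ContDiffBump (0 : Plane) := ⟨ρ / 4, ρ / 2, by positivity, by linarith⟩
  have hχ_zero : ∀ z, ρ / 2 ≤ ‖z‖ → χ z * v z = 0 := fun z hz => by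
    rw [χ.zero_of_le_dist (by simpa using hz), zero_mul]
  have hχ_one : Set.EqOn (fun z => χ z * v z) v (ball 0 (ρ / 4)) := fun z hz => by
    simp only [χ.one_of_mem_closedBall (ball_subset_closedBall hz), one_mul]
  refine ⟨fun z => χ z * v z, ρ / 4,
    { pos := by positivity
      smooth := fun z hz => ?_
      nonneg := fun z hz => ?_
      supp := fun z hz => hχ_zero z (by linarith)
      superharmonic := fun z hz hzr => ?_ }, by linarith, hχ_one⟩
  · rcases lt_or_ge ‖z‖ R with hzR | hzR
    · exact χ.contDiffAt.mul
        (hv.contDiffAt ((isOpen_punctured_ball R).mem_nhds ⟨norm_pos_iff.2 hz, hzR⟩))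
    · refine (contDiffAt_const (c := (0 : ℝ))).congr_of_eventuallyEq ?_
      filter_upwards [continuous_norm.continuousAt.eventually
        (lt_mem_nhds (show ρ / 2 < ‖z‖ by linarith))] with w hw using hχ_zero w hw.le
  · rcases lt_or_ge ‖z‖ R with hzR | hzR
    · exact mul_nonneg χ.nonneg (hv_nonneg z (norm_pos_iff.2 hz) hzR)
    · exact (hχ_zero z (by linarith)).ge
  · rw [lap_congr (hχ_one.eventuallyEq_of_mem (isOpen_ball.mem_nhds (by simpa using hzr)))]
    linarith [hv_lap z (norm_pos_iff.2 hz) (by linarith)]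

end Cutoff

theorem dichotomy_of_nonneg {R C β : ℝ} {v : Plane → ℝ} (hR : 0 < R) (hC : 0 ≤ C) (hβ : 0 ≤ β)
    (hv : ContDiffOn ℝ 2 v {z | 0 < ‖z‖ ∧ ‖z‖ < R})
    (hv_nonneg : ∀ z, 0 < ‖z‖ → ‖z‖ < R → 0 ≤ v z)
    (hv_lap : ∀ z, 0 < ‖z‖ → ‖z‖ < R → 0 ≤ -lap v z ∧ -lap v z ≤ C * Real.exp (β * v z)) :
    (∃ ε g, 0 < ε ∧ ε ≤ R ∧ ContDiff ℝ 1 g ∧ Set.EqOn v g (ball 0 ε \ {0})) ∨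
      ∃ m, 0 < m ∧ Tendsto (fun z => v z / -Real.log ‖z‖) (𝓝[≠] 0) (𝓝 m) := by
  obtain ⟨ψ, r, h, hrR, heq⟩ := exists_isPuncturedSuperharmonic hR hv hv_nonneg
    fun z hz hzR => (hv_lap z hz hzR).1
  have hexp : ∀ z, z ≠ 0 → ‖z‖ < r → -lap ψ z ≤ C * Real.exp (β * ψ z) := fun z hz hzr => by
    have hz_mem : z ∈ ball 0 r := mem_ball_zero_iff.2 hzr
    rw [lap_congr (heq.eventuallyEq_of_mem (isOpen_ball.mem_nhds hz_mem)), heq hz_mem]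
    exact (hv_lap z (norm_pos_iff.2 hz) (hzr.trans_le hrR)).2
  rcases (h.logCoeff_nonneg hC hβ hexp).eq_or_lt with hzero | hpos
  · obtain ⟨g, hg, hψg⟩ := h.exists_contDiff_extension hC hβ hexp hzero.symm
    exact .inl ⟨r, g, h.pos, hrR, hg, fun z hz => (heq hz.1).symm.trans (hψg z hz.2)⟩
  · refine .inr ⟨_, hpos, (h.tendsto_div_log hC hβ hexp).congr' ?_⟩
    filter_upwards [nhdsWithin_le_nhds (ball_mem_nhds 0 h.pos)] with z hz using by rw [heq hz]

theorem tendsto_div_neg_log_of_sub_const {v : Plane → ℝ} {M m : ℝ}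
    (h : Tendsto (fun z => (v z - M) / -Real.log ‖z‖) (𝓝[≠] 0) (𝓝 m)) :
    Tendsto (fun z => v z / -Real.log ‖z‖) (𝓝[≠] 0) (𝓝 m) := by
  have hsum := h.add (tendsto_neg_log_norm.const_div_atTop M)
  rw [add_zero] at hsum
  exact hsum.congr fun z => by rw [← add_div, sub_add_cancel]

theorem taliaferro_dichotomy_positive_general {R C β M : ℝ} {v : Plane → ℝ} (hR : 0 < R)
    (hv : ContDiffOn ℝ 2 v {z | 0 < ‖z‖ ∧ ‖z‖ < R})
    (hv_le : ∀ z, 0 < ‖z‖ → ‖z‖ < R → M ≤ v z)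
    (hv_lap : ∀ z, 0 < ‖z‖ → ‖z‖ < R → 0 ≤ -lap v z ∧ -lap v z ≤ C * Real.exp (β * v z)) :
    (∃ ε g, 0 < ε ∧ ε ≤ R ∧ ContDiffOn ℝ 1 g (ball 0 ε) ∧ Set.EqOn v g (ball 0 ε \ {0})) ∨
      ∃ m, 0 < m ∧ Tendsto (fun z => v z / Real.log (1 / ‖z‖)) (𝓝[≠] 0) (𝓝 m) := by
  have hexp : ∀ z, 0 < ‖z‖ → ‖z‖ < R →
      C * Real.exp (β * v z) ≤ |C| * Real.exp (β * M) * Real.exp (|β| * (v z - M)) :=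
    fun z hz hzR => by
      rw [mul_assoc, ← Real.exp_add]
      have hβ := mul_le_mul_of_nonneg_right (le_abs_self β) (sub_nonneg.2 (hv_le z hz hzR))
      gcongr
      · exact le_abs_self C
      · linarith
  simp only [one_div, Real.log_inv]
  rcases dichotomy_of_nonneg (C := |C| * Real.exp (β * M)) (v := fun z => v z - M) hR
      (by positivity) (abs_nonneg β) (hv.sub contDiffOn_const)
      (fun z hz hzR => sub_nonneg.2 (hv_le z hz hzR))
      (fun z hz hzR => by
        rw [lap_sub_const]
        exact ⟨(hv_lap z hz hzR).1, (hv_lap z hz hzR).2.trans (hexp z hz hzR)⟩) with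
    ⟨ε, g, hε, hεR, hg, heq⟩ | ⟨m, hm, hlim⟩
  · exact .inl ⟨ε, fun z => g z + M, hε, hεR, (hg.add contDiff_const).contDiffOn,
      fun z hz => sub_eq_iff_eq_add.1 (heq hz)⟩
  · exact .inr ⟨m, hm, tendsto_div_neg_log_of_sub_const hlim⟩

/-- (Taliaferro) Let `v` be a `C²` positive solution of `0 ≤ -Δv ≤ C e^{2v}` on a
punctured disk `{0 < |z| < R}` around the origin of `ℝ²`. Then either `v` extends to a
`C¹` function on a neighborhood of the origin, or `v(z)/log(1/|z|) → m₁` as `|z| → 0⁺`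
for some finite positive number `m₁`. -/
theorem taliaferro_dichotomy_positive
    (R C : ℝ) (hR : 0 < R) (hC : 0 < C)
    (v : EuclideanSpace ℝ (Fin 2) → ℝ)
    (hv : ContDiffOn ℝ 2 v {z | 0 < ‖z‖ ∧ ‖z‖ < R})
    (hpos : ∀ z : EuclideanSpace ℝ (Fin 2), 0 < ‖z‖ → ‖z‖ < R → 0 < v z)
    (hineq : ∀ z : EuclideanSpace ℝ (Fin 2), 0 < ‖z‖ → ‖z‖ < R →
      0 ≤ -lap v z ∧ -lap v z ≤ C * Real.exp (2 * v z)) :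
    (∃ ε : ℝ, ∃ g : EuclideanSpace ℝ (Fin 2) → ℝ, 0 < ε ∧ ε ≤ R ∧
        ContDiffOn ℝ 1 g (ball (0 : EuclideanSpace ℝ (Fin 2)) ε) ∧
        Set.EqOn v g (ball (0 : EuclideanSpace ℝ (Fin 2)) ε \ {0})) ∨
    (∃ m₁ : ℝ, 0 < m₁ ∧
      Tendsto (fun z => v z / Real.log (1 / ‖z‖))
        (nhdsWithin (0 : EuclideanSpace ℝ (Fin 2)) {0}ᶜ) (nhds m₁)) :=
  taliaferro_dichotomy_positive_general hR hv (fun z hz hzR => (hpos z hz hzR).le) hineq
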